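/- There exists ε₀ > 0 such that for every 0 < ε ≤ ε₀ there exists η₀ > 0 such that for every 0 < η ≤ η₀ there is a homeomorphism h from the Milnor tube N(ε,η) = {x ∈ B̄(0,ε) : ‖f(x)‖ = η} onto {x ∈ S(0,ε) : ‖f(x)‖ ≥ η} satisfying f(h(x))/‖f(h(x))‖ = f(x)/‖f(x)‖ for all x ∈ N(ε,η); that is, the Milnor–Lê fibration on the tube and the Milnor fibration f/‖f‖ on the sphere are equivalent. -/

import Mathlib

/-!
Near the origin and off `f = 0` there is a vector field `v` with `df(v) = f` and `Re ⟪z, v⟫ > 0`.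
Along its trajectories the argument of `f` is constant, `‖f‖` grows like `exp t`, and the distance
to the origin strictly increases; so every point of the tube reaches the sphere of radius `ε`
exactly once, and a point `y` of the sphere with `η ≤ ‖f y‖` is brought back to the tube by flowing
backwards for the time `log (‖f y‖ / η)`. This is a continuous bijection from a compact part of the
sphere onto the tube, and its inverse is the required homeomorphism.

Such a field can be glued from local ones as soon as, wherever the gradient of `log f` equals `λ z`,
the number `λ` has positive real part. This is Milnor's lemma. If it failed arbitrarily close to the
origin, the failures would carry an ultrafilter `𝓤` converging to the origin. In a chart `φ` along
which `𝓤` lifts, and in which the coordinates `φᵢ` and `f ∘ φ` are monomials `y ^ βᵢ` and `y ^ α`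
times units, evaluating `d log f` on the image of the Euler field `∑ yⱼ ∂/∂yⱼ` gives `|α| + o(1)` on
the one hand and `λ̄ ∑ (|βᵢ| + o(1)) ‖φᵢ‖²` on the other, so `Re λ > 0` after all.

These charts exist by local monomialization; following an ultrafilter means that only one chart of
each blow-up matters. The induction is on the dimension and on the order in a distinguished variable
`t`: a Tschirnhaus shift removes the coefficient of `t ^ (d - 1)`, the induction on the dimension
makes the remaining coefficients monomial, toric charts make them comparable, and a blow-up then
lowers the order or makes `t ^ d` dominant.
-/

open Set Filter Topology MeasureTheory

/-! ### Osgood's lemma -/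

section Osgood

variable {F : Type*} [NormedAddCommGroup F] [NormedSpace ℂ F]

theorem exists_clm_eq_integral_smul {K : Type*} [TopologicalSpace K] [CompactSpace K]
    [SecondCountableTopology K] [MeasurableSpace K] [OpensMeasurableSpace K]
    (μ : Measure K) [IsFiniteMeasure μ] (g : C(K, F)) :
    ∃ ℓ : C(K, ℂ) →L[ℂ] F, ∀ k, ℓ k = ∫ θ, k θ • g θ ∂μ := by
  have hbound : ∀ (k : C(K, ℂ)) θ, ‖k θ • g θ‖ ≤ ‖k‖ * ‖g‖ := fun k θ =>
    (norm_smul_le _ _).trans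
      (mul_le_mul (k.norm_coe_le_norm θ) (g.norm_coe_le_norm θ) (norm_nonneg _) (norm_nonneg _))
  have hint : ∀ k : C(K, ℂ), Integrable (fun θ => k θ • g θ) μ := fun k =>
    Integrable.of_bound (k • g).continuous.aestronglyMeasurable _ (Eventually.of_forall (hbound k))
  refine ⟨LinearMap.mkContinuous
    { toFun := fun k => ∫ θ, k θ • g θ ∂μ
      map_add' := fun a b => ?_
      map_smul' := fun a b => ?_ } (‖g‖ * μ.real univ) fun k => ?_, fun k => rfl⟩
  · simp only [ContinuousMap.add_apply, add_smul]
    exact integral_add (hint a) (hint b)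
  · simp only [ContinuousMap.smul_apply, smul_assoc, RingHom.id_apply]
    exact integral_smul a _
  · calc ‖∫ θ, k θ • g θ ∂μ‖ ≤ ‖k‖ * ‖g‖ * μ.real univ :=
          norm_integral_le_of_norm_le_const (Eventually.of_forall (hbound k))
      _ = ‖g‖ * μ.real univ * ‖k‖ := by ring

/- The Cauchy kernel is an analytic function of the point with values in the Banach algebra of
continuous functions on `K`, on which integration is a continuous linear functional. -/
theorem analyticAt_integral_prod_inv_sub_smul {ι K : Type*} [Fintype ι] [TopologicalSpace K]
    [CompactSpace K] [SecondCountableTopology K] [MeasurableSpace K] [OpensMeasurableSpace K]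
    (μ : Measure K) [IsFiniteMeasure μ] (p : ι → C(K, ℂ)) (g : C(K, F)) {c : ι → ℂ}
    (hc : ∀ i θ, p i θ ≠ c i) :
    AnalyticAt ℂ (fun w : ι → ℂ => ∫ θ, (∏ i, (p i θ - w i)⁻¹) • g θ ∂μ) c := by
  obtain ⟨ℓ, hℓ⟩ := exists_clm_eq_integral_smul μ g
  let q (i : ι) (w : ι → ℂ) : C(K, ℂ) := p i - algebraMap ℂ C(K, ℂ) (w i)
  have hq : ∀ i, AnalyticAt ℂ (q i) c := fun i => analyticAt_const.sub
    (((Algebra.linearMap ℂ C(K, ℂ)).toContinuousLinearMap.comp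
      (ContinuousLinearMap.proj (R := ℂ) (φ := fun _ : ι => ℂ) i)).analyticAt c)
  have hunit : ∀ i, IsUnit (q i c) := fun i =>
    (ContinuousMap.isUnit_iff_forall_ne_zero _).2 fun θ => sub_ne_zero.2 (hc i θ)
  have hinv : ∀ i, AnalyticAt ℂ (fun w => Ring.inverse (q i w)) c := fun i => by
    obtain ⟨u, hu⟩ := hunit i
    exact (analyticAt_inverse u).fun_comp_of_eq (hq i) hu.symm
  have hunits : ∀ᶠ w in 𝓝 c, ∀ i, IsUnit (q i w) := eventually_all.2 fun i =>
    (hq i).continuousAt.eventually (Units.isOpen.mem_nhds (hunit i))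
  refine ((ℓ.analyticAt _).fun_comp_of_eq
    (Finset.analyticAt_fun_prod Finset.univ fun i _ => hinv i) rfl).congr ?_
  filter_upwards [hunits] with w hw
  refine (hℓ _).trans (integral_congr_ae (Eventually.of_forall fun θ => ?_))
  have hqinv : ∀ i, Ring.inverse (q i w) θ = (p i θ - w i)⁻¹ := fun i =>
    eq_inv_of_mul_eq_one_right
      (congrArg (fun k : C(K, ℂ) => k θ) (Ring.mul_inverse_cancel _ (hw i)))
  simp only [ContinuousMap.prod_apply, hqinv]

section Torus

variable {n : ℕ} {c w : Fin n → ℂ} {R : ℝ}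

theorem continuous_torusMap (c : Fin n → ℂ) (R : Fin n → ℝ) : Continuous (torusMap c R) := by
  unfold torusMap
  fun_prop

theorem continuous_torusMap_apply (c : Fin n → ℂ) (R : Fin n → ℝ) (i : Fin n) :
    Continuous fun θ => torusMap c R θ i :=
  (continuous_apply i).comp (continuous_torusMap c R)

theorem torusMap_mem_closedBall (hR : 0 ≤ R) (θ : Fin n → ℝ) :
    torusMap c (fun _ => R) θ ∈ Metric.closedBall c R :=
  (dist_pi_le_iff hR).2 fun i => by
    simp [torusMap, Complex.norm_exp, dist_eq_norm, abs_of_nonneg hR]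

theorem torusMap_ne_of_mem_ball (hw : w ∈ Metric.ball c R) (θ : Fin n → ℝ) (i : Fin n) :
    torusMap c (fun _ => R) θ i ≠ w i := by
  have hR : 0 < R := dist_nonneg.trans_lt hw
  intro h
  have hi := (dist_pi_lt_iff hR).1 hw i
  rw [← h] at hi
  simp [torusMap, Complex.norm_exp, dist_eq_norm, abs_of_pos hR] at hi

theorem continuous_comp_torusMap {X : Type*} [TopologicalSpace X] {f : (Fin n → ℂ) → X} (hR : 0 ≤ R)
    (hf : ∀ z ∈ Metric.closedBall c R, ContinuousAt f z) :
    Continuous fun θ => f (torusMap c (fun _ => R) θ) :=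
  continuous_iff_continuousAt.2 fun θ => ContinuousAt.comp (f := torusMap c _)
    (hf _ (torusMap_mem_closedBall hR θ)) (continuous_torusMap c _).continuousAt

theorem torusIntegrable_prod_inv_sub_smul {f : (Fin n → ℂ) → F}
    (hf : Continuous fun θ => f (torusMap c (fun _ => R) θ)) (hw : w ∈ Metric.ball c R) :
    TorusIntegrable (fun z => (∏ i, (z i - w i)⁻¹) • f z) c (fun _ => R) :=
  Continuous.integrableOn_Icc <| Continuous.smul (continuous_finsetProd _ fun i _ =>
    ((continuous_torusMap_apply c _ i).sub continuous_const).inv₀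
      fun θ => sub_ne_zero.2 (torusMap_ne_of_mem_ball hw θ i)) hf

theorem cons_mem_closedBall {c : Fin (n + 1) → ℂ} {x : ℂ} {y : Fin n → ℂ} (hR : 0 ≤ R)
    (hx : x ∈ Metric.closedBall (c 0) R) (hy : y ∈ Metric.closedBall (c ∘ Fin.succ) R) :
    (Fin.cons x y : Fin (n + 1) → ℂ) ∈ Metric.closedBall c R :=
  (dist_pi_le_iff hR).2 <| Fin.cases (by simpa using hx) fun j => by
    simpa using (dist_pi_le_iff hR).1 hy j

theorem torusIntegral_prod_inv_sub_smul [CompleteSpace F] {f : (Fin n → ℂ) → F}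
    (hf : ∀ z ∈ Metric.closedBall c R, DifferentiableAt ℂ f z) (hw : w ∈ Metric.ball c R) :
    torusIntegral (fun z => (∏ i, (z i - w i)⁻¹) • f z) c (fun _ => R)
      = (2 * Real.pi * Complex.I) ^ n • f w := by
  have hR : 0 < R := dist_nonneg.trans_lt hw
  induction n with
  | zero => simp [Subsingleton.elim c w]
  | succ n ih =>
    have hw₀ : w 0 ∈ Metric.ball (c 0) R := (dist_pi_lt_iff hR).1 hw 0
    have hw' : w ∘ Fin.succ ∈ Metric.ball (c ∘ Fin.succ) R :=
      (dist_pi_lt_iff hR).2 fun i => (dist_pi_lt_iff hR).1 hw i.succ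
    have hinner : ∀ x ∈ Metric.sphere (c 0) R,
        torusIntegral (fun y : Fin n → ℂ =>
            (∏ i, ((Fin.cons x y : Fin (n + 1) → ℂ) i - w i)⁻¹) • f (Fin.cons x y))
          (c ∘ Fin.succ) (fun _ => R)
        = (2 * Real.pi * Complex.I) ^ n • ((x - w 0)⁻¹ • f (Fin.cons x (w ∘ Fin.succ))) := by
      intro x hx
      rw [← ih (f := fun y => (x - w 0)⁻¹ • f (Fin.cons x y)) (fun y hy => ?_) hw']
      · simp only [Fin.prod_univ_succ, Fin.cons_zero, Fin.cons_succ, smul_smul, mul_comm,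
          Function.comp_apply]
      · exact ((hf _ (cons_mem_closedBall hR.le (Metric.sphere_subset_closedBall hx) hy)).comp y
          (by fun_prop)).const_smul _
    have hslice : DifferentiableOn ℂ (fun x => f (Fin.cons x (w ∘ Fin.succ)))
        (Metric.closedBall (c 0) R) := fun x hx =>
      ((hf _ (cons_mem_closedBall hR.le hx (Metric.ball_subset_closedBall hw'))).comp x
        (by fun_prop)).differentiableWithinAt
    have hcons : (Fin.cons (w 0) (w ∘ Fin.succ) : Fin (n + 1) → ℂ) = w := Fin.cons_self_tail w
    calc _ = _ := torusIntegral_succ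
          (torusIntegrable_prod_inv_sub_smul
            (continuous_comp_torusMap hR.le fun z hz => (hf z hz).continuousAt) hw)
      _ = _ := circleIntegral.integral_congr hR.le hinner
      _ = _ := by
        rw [circleIntegral.integral_smul, hslice.circleIntegral_sub_inv_smul hw₀, hcons, smul_smul,
          pow_succ]

theorem analyticAt_torusIntegral_prod_inv_sub_smul {f : (Fin n → ℂ) → F} (hR : 0 < R)
    (hf : Continuous fun θ => f (torusMap c (fun _ => R) θ)) :
    AnalyticAt ℂ
      (fun w => torusIntegral (fun z => (∏ i, (z i - w i)⁻¹) • f z) c (fun _ => R)) c := by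
  let K : Set (Fin n → ℝ) := Icc 0 fun _ => 2 * Real.pi
  have : CompactSpace K := isCompact_iff_compactSpace.1 isCompact_Icc
  have hfin : volume K < ⊤ := measure_Icc_lt_top
  have : IsFiniteMeasure (volume.comap ((↑) : K → Fin n → ℝ)) :=
    ⟨by rwa [comap_subtype_coe_apply measurableSet_Icc, image_univ, Subtype.range_coe]⟩
  have hjac : Continuous fun θ : Fin n → ℝ =>
      (∏ i, R * Complex.exp (θ i * Complex.I) * Complex.I : ℂ) := by fun_prop
  let p (i : Fin n) : C(K, ℂ) := ⟨fun θ => torusMap c (fun _ => R) θ i,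
    (continuous_torusMap_apply c (fun _ => R) i).comp continuous_subtype_val⟩
  let g : C(K, F) := ⟨fun θ => (∏ i, R * Complex.exp (θ.1 i * Complex.I) * Complex.I : ℂ) •
    f (torusMap c (fun _ => R) θ),
    (hjac.comp continuous_subtype_val).smul (hf.comp continuous_subtype_val)⟩
  refine (analyticAt_integral_prod_inv_sub_smul (volume.comap ((↑) : K → Fin n → ℝ)) p g
    fun i θ => torusMap_ne_of_mem_ball (Metric.mem_ball_self hR) θ i).congr
    (Eventually.of_forall fun w => ?_)
  simp only [torusIntegral, ← integral_subtype_comap measurableSet_Icc]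
  simp only [p, g, ContinuousMap.coe_mk, smul_smul, mul_comm]
  rfl

theorem exists_forall_mem_closedBall_differentiableAt {U : Set (Fin n → ℂ)}
    {f : (Fin n → ℂ) → F} (hf : DifferentiableOn ℂ f U) (hU : U ∈ 𝓝 c) :
    ∃ R > 0, ∀ z ∈ Metric.closedBall c R, DifferentiableAt ℂ f z := by
  obtain ⟨R, hR, hRU⟩ := Metric.nhds_basis_closedBall.mem_iff.1 (interior_mem_nhds.2 hU)
  exact ⟨R, hR, fun z hz => hf.differentiableAt (mem_interior_iff_mem_nhds.1 (hRU hz))⟩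

theorem analyticAt_pi_of_differentiableOn [CompleteSpace F] {U : Set (Fin n → ℂ)}
    {f : (Fin n → ℂ) → F} (hf : DifferentiableOn ℂ f U) (hU : U ∈ 𝓝 c) : AnalyticAt ℂ f c := by
  obtain ⟨R, hR, hf'⟩ := exists_forall_mem_closedBall_differentiableAt hf hU
  refine ((analyticAt_torusIntegral_prod_inv_sub_smul hR (continuous_comp_torusMap hR.le
    fun z hz => (hf' z hz).continuousAt)).const_smul
      (c := ((2 * Real.pi * Complex.I : ℂ) ^ n)⁻¹)).congr ?_
  filter_upwards [Metric.ball_mem_nhds c hR] with w hw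
  rw [Pi.smul_apply, inv_smul_eq_iff₀ (pow_ne_zero _ (by simp [Real.pi_ne_zero])),
    torusIntegral_prod_inv_sub_smul hf' hw]

theorem prod_inv_sub_sub_prod_inv_update {ι 𝕜 : Type*} [Fintype ι] [DecidableEq ι] [Field 𝕜]
    {z w : ι → 𝕜} {i : ι} {a : 𝕜} (hw : z i ≠ w i) (ha : z i ≠ a) :
    ∏ j, (z j - w j)⁻¹ - ∏ j, (z j - Function.update w i a j)⁻¹
      = (w i - a) * ((∏ j, (z j - w j)⁻¹) * (z i - a)⁻¹) := by
  have hprod : ∏ j ∈ Finset.univ.erase i, (z j - Function.update w i a j)⁻¹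
      = ∏ j ∈ Finset.univ.erase i, (z j - w j)⁻¹ := Finset.prod_congr rfl fun j hj => by
    rw [Function.update_of_ne (Finset.ne_of_mem_erase hj)]
  have hw' := sub_ne_zero.2 hw
  have ha' := sub_ne_zero.2 ha
  simp only [← Finset.mul_prod_erase _ _ (Finset.mem_univ i), hprod, Function.update_self]
  field_simp
  ring

/- The quotient is given by the Cauchy integral of `f z / (z i - c i)`. -/
theorem exists_analyticAt_eq_update_add_smul [CompleteSpace F] {f : (Fin n → ℂ) → F}
    (hf : AnalyticAt ℂ f c) (i : Fin n) :
    ∃ h : (Fin n → ℂ) → F, AnalyticAt ℂ h c ∧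
      ∀ᶠ w in 𝓝 c, f w = f (Function.update w i (c i)) + (w i - c i) • h w := by
  obtain ⟨U, hU, hfU⟩ := hf.exists_mem_nhds_analyticOnNhd
  obtain ⟨R, hR, hf'⟩ := exists_forall_mem_closedBall_differentiableAt hfU.differentiableOn hU
  have hfc := continuous_comp_torusMap hR.le fun z hz => (hf' z hz).continuousAt
  have hne := torusMap_ne_of_mem_ball (Metric.mem_ball_self (x := c) hR)
  let g (z : Fin n → ℂ) : F := (z i - c i)⁻¹ • f z
  have hgc : Continuous fun θ => g (torusMap c (fun _ => R) θ) :=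
    (((continuous_torusMap_apply c _ i).sub continuous_const).inv₀
      fun θ => sub_ne_zero.2 (hne θ i)).smul hfc
  let cauchy (g : (Fin n → ℂ) → F) (w : Fin n → ℂ) : F :=
    ((2 * Real.pi * Complex.I : ℂ) ^ n)⁻¹ •
      torusIntegral (fun z => (∏ j, (z j - w j)⁻¹) • g z) c (fun _ => R)
  have hcauchy : ∀ w ∈ Metric.ball c R, f w = cauchy f w := fun w hw => by
    rw [eq_inv_smul_iff₀ (pow_ne_zero _ (by simp [Real.pi_ne_zero])),
      torusIntegral_prod_inv_sub_smul hf' hw]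
  refine ⟨cauchy g, (analyticAt_torusIntegral_prod_inv_sub_smul hR hgc).const_smul, ?_⟩
  filter_upwards [Metric.ball_mem_nhds c hR] with w hw
  have hw' : Function.update w i (c i) ∈ Metric.ball c R := (dist_pi_lt_iff hR).2 fun j => by
    rcases eq_or_ne j i with rfl | hj
    · simpa using hR
    · simpa [hj] using (dist_pi_lt_iff hR).1 hw j
  rw [hcauchy w hw, hcauchy _ hw', ← sub_eq_iff_eq_add', ← smul_sub, smul_comm]
  refine congrArg _ ?_
  rw [← torusIntegral_sub (torusIntegrable_prod_inv_sub_smul hfc hw)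
    (torusIntegrable_prod_inv_sub_smul hfc hw'), ← torusIntegral_smul]
  simp only [torusIntegral, g, smul_smul, ← sub_smul,
    prod_inv_sub_sub_prod_inv_update (torusMap_ne_of_mem_ball hw _ i) (hne _ i)]

end Torus

theorem analyticAt_of_differentiableOn {E : Type*} [NormedAddCommGroup E] [NormedSpace ℂ E]
    [FiniteDimensional ℂ E] [CompleteSpace F] {U : Set E} {f : E → F} {c : E}
    (hf : DifferentiableOn ℂ f U) (hU : U ∈ 𝓝 c) : AnalyticAt ℂ f c := by
  let e : E ≃L[ℂ] (Fin (Module.finrank ℂ E) → ℂ) := ContinuousLinearEquiv.ofFinrankEq (by simp)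
  have hcoord : AnalyticAt ℂ (f ∘ e.symm) (e c) :=
    analyticAt_pi_of_differentiableOn (U := e.symm ⁻¹' U)
      (hf.comp e.symm.differentiable.differentiableOn fun _ hx => hx)
      (e.symm.continuous.continuousAt (by simpa using hU))
  refine (hcoord.fun_comp_of_eq (e.toContinuousLinearMap.analyticAt c) rfl).congr
    (Eventually.of_forall fun x => ?_)
  simp

end Osgood

/-! ### Monomials times units -/

section Germs

variable {E F : Type*} [NormedAddCommGroup E] [NormedSpace ℂ E]
  [NormedAddCommGroup F] [NormedSpace ℂ F]

theorem tendsto_zero_of_analyticAt {φ : E → F} (hφ : AnalyticAt ℂ φ 0) (hφ0 : φ 0 = 0) :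
    Tendsto φ (𝓝 0) (𝓝 0) := by
  simpa only [hφ0] using hφ.continuousAt.tendsto

theorem eventually_eq_zero_or_eq_zero_of_mul {f g : E → ℂ} (hf : AnalyticAt ℂ f 0)
    (hg : AnalyticAt ℂ g 0) (hfg : ∀ᶠ x in 𝓝 0, f x * g x = 0) :
    (∀ᶠ x in 𝓝 0, f x = 0) ∨ ∀ᶠ x in 𝓝 0, g x = 0 := by
  obtain ⟨r, hr, hball⟩ := Metric.eventually_nhds_iff_ball.1
    ((hf.eventually_analyticAt.and hg.eventually_analyticAt).and hfg)
  refine or_iff_not_imp_left.2 fun hf0 => ?_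
  obtain ⟨x, hfx, hx⟩ := ((not_eventually.1 hf0).and_eventually (Metric.ball_mem_nhds 0 hr)).exists
  have hgx : g =ᶠ[𝓝 x] 0 := by
    filter_upwards [(hball x hx).1.1.continuousAt.eventually_ne hfx,
      Metric.isOpen_ball.mem_nhds hx] with y hfy hy
    exact (mul_eq_zero.1 (hball y hy).2).resolve_left hfy
  have hg_ball : AnalyticOnNhd ℂ g (Metric.ball 0 r) := fun y hy => (hball y hy).1.2
  have : NormedSpace ℝ E := NormedSpace.restrictScalars ℝ ℂ E
  exact mem_of_superset (Metric.ball_mem_nhds _ hr)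
    (hg_ball.eqOn_zero_of_preconnected_of_eventuallyEq_zero (convex_ball _ _).isPreconnected hx hgx)

theorem eventually_eq_of_mul_eq_mul_left {a f g : E → ℂ} (ha : AnalyticAt ℂ a 0)
    (ha0 : ¬ ∀ᶠ x in 𝓝 0, a x = 0) (hf : AnalyticAt ℂ f 0) (hg : AnalyticAt ℂ g 0)
    (h : ∀ᶠ x in 𝓝 0, a x * f x = a x * g x) : ∀ᶠ x in 𝓝 0, f x = g x := by
  have hmul : ∀ᶠ x in 𝓝 0, a x * (f x - g x) = 0 := h.mono fun x hx => by
    rw [mul_sub, hx, sub_self]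
  exact ((eventually_eq_zero_or_eq_zero_of_mul ha (hf.fun_sub hg) hmul).resolve_left ha0).mono
    fun x hx => sub_eq_zero.1 hx

theorem not_eventually_prod_eq_zero {κ : Type*} (s : Finset κ) {f : κ → E → ℂ}
    (hf : ∀ k ∈ s, AnalyticAt ℂ (f k) 0) (hf0 : ∀ k ∈ s, ¬ ∀ᶠ x in 𝓝 0, f k x = 0) :
    ¬ ∀ᶠ x in 𝓝 0, ∏ k ∈ s, f k x = 0 := by
  classical
  induction s using Finset.induction_on with
  | empty => simpa using (nhds_neBot (x := (0 : E))).ne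
  | insert k s hk ih =>
    simp only [Finset.forall_mem_insert] at hf hf0
    simp only [Finset.prod_insert hk]
    exact fun h => (eventually_eq_zero_or_eq_zero_of_mul hf.1
      (s.analyticAt_fun_prod hf.2) h).elim hf0.1 (ih hf.2 hf0.2)

end Germs

section Monomials

variable {m n : ℕ} {α β : Fin n → ℕ} {g h : (Fin n → ℂ) → ℂ} {φ : (Fin m → ℂ) → Fin n → ℂ}

/-- Near the origin, `g` is the monomial with exponent vector `α` times a holomorphic unit. -/
def HasExponent (g : (Fin n → ℂ) → ℂ) (α : Fin n → ℕ) : Prop :=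
  ∃ v : (Fin n → ℂ) → ℂ, AnalyticAt ℂ v 0 ∧ v 0 ≠ 0 ∧ ∀ᶠ y in 𝓝 0, g y = (∏ i, y i ^ α i) * v y

/-- Near the origin, `g` is a monomial times a holomorphic unit. -/
def IsMonomialGerm (g : (Fin n → ℂ) → ℂ) : Prop := ∃ α, HasExponent g α

/-- Divisibility of germs at the origin, with a holomorphic quotient. -/
def GermDvd (g h : (Fin n → ℂ) → ℂ) : Prop :=
  ∃ q : (Fin n → ℂ) → ℂ, AnalyticAt ℂ q 0 ∧ ∀ᶠ y in 𝓝 0, h y = q y * g y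

theorem analyticAt_coord (i : Fin n) (x : Fin n → ℂ) : AnalyticAt ℂ (fun y : Fin n → ℂ => y i) x :=
  (ContinuousLinearMap.proj (R := ℂ) (φ := fun _ : Fin n => ℂ) i).analyticAt x

theorem analyticAt_monomial (α : Fin n → ℕ) (x : Fin n → ℂ) :
    AnalyticAt ℂ (fun y : Fin n → ℂ => ∏ i, y i ^ α i) x :=
  Finset.univ.analyticAt_fun_prod fun i _ => (analyticAt_coord i x).fun_pow _

namespace HasExponent

theorem analyticAt (hg : HasExponent g α) : AnalyticAt ℂ g 0 := by
  obtain ⟨v, hv, -, hgv⟩ := hg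
  exact ((analyticAt_monomial α 0).fun_mul hv).congr (EventuallyEq.symm hgv)

theorem congr (hg : HasExponent g α) (hgh : ∀ᶠ y in 𝓝 0, h y = g y) : HasExponent h α := by
  obtain ⟨v, hv, hv0, hgv⟩ := hg
  exact ⟨v, hv, hv0, EventuallyEq.trans hgh hgv⟩

theorem of_ne_zero (hg : AnalyticAt ℂ g 0) (hg0 : g 0 ≠ 0) : HasExponent g 0 :=
  ⟨g, hg, hg0, by simp⟩

theorem coord (i : Fin n) : HasExponent (fun y : Fin n → ℂ => y i) (Pi.single i 1) :=
  ⟨1, analyticAt_const, one_ne_zero, Eventually.of_forall fun y => by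
    simp [Pi.single_apply]⟩

theorem mul (hg : HasExponent g α) (hh : HasExponent h β) :
    HasExponent (fun y => g y * h y) (α + β) := by
  obtain ⟨v, hv, hv0, hgv⟩ := hg
  obtain ⟨w, hw, hw0, hhw⟩ := hh
  refine ⟨fun y => v y * w y, hv.fun_mul hw, mul_ne_zero hv0 hw0, ?_⟩
  filter_upwards [hgv, hhw] with y hgy hhy
  rw [hgy, hhy, mul_mul_mul_comm]
  simp only [Pi.add_apply, pow_add, Finset.prod_mul_distrib]

theorem pow (hg : HasExponent g α) (k : ℕ) : HasExponent (fun y => g y ^ k) (k • α) := by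
  induction k with
  | zero => simpa using of_ne_zero (analyticAt_const (v := (1 : ℂ))) one_ne_zero
  | succ k ih => simpa only [pow_succ, succ_nsmul] using ih.mul hg

theorem prod {κ : Type*} {g : κ → (Fin n → ℂ) → ℂ} {α : κ → Fin n → ℕ} (s : Finset κ)
    (hg : ∀ k ∈ s, HasExponent (g k) (α k)) :
    HasExponent (fun y => ∏ k ∈ s, g k y) (∑ k ∈ s, α k) := by
  classical
  induction s using Finset.induction_on with
  | empty => simpa using of_ne_zero (analyticAt_const (v := (1 : ℂ))) one_ne_zero
  | insert k s hk ih =>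
    simp only [Finset.forall_mem_insert] at hg
    simpa only [Finset.prod_insert hk, Finset.sum_insert hk] using hg.1.mul (ih hg.2)

theorem comp (hg : HasExponent g α) (hφ : AnalyticAt ℂ φ 0) (hφ0 : φ 0 = 0)
    {M : Fin n → Fin m → ℕ} (hM : ∀ i, HasExponent (fun y => φ y i) (M i)) :
    HasExponent (fun y => g (φ y)) (∑ i, α i • M i) := by
  obtain ⟨v, hv, hv0, hgv⟩ := hg
  have hunit : HasExponent (fun y => v (φ y)) 0 :=
    of_ne_zero (hv.fun_comp_of_eq hφ hφ0) (by rwa [hφ0])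
  simpa only [add_zero] using ((prod Finset.univ fun i _ => (hM i).pow (α i)).mul hunit).congr
    ((tendsto_zero_of_analyticAt hφ hφ0).eventually hgv)

theorem not_eventually_eq_zero (hg : HasExponent g α) : ¬ ∀ᶠ y in 𝓝 0, g y = 0 := by
  obtain ⟨v, hv, hv0, hgv⟩ := hg
  intro hg0
  have hdiag : Tendsto (fun t : ℂ => (fun _ => t : Fin n → ℂ)) (𝓝[≠] 0) (𝓝 0) :=
    ((by fun_prop : Continuous fun t : ℂ => (fun _ => t : Fin n → ℂ)).tendsto' 0 0 rfl).mono_left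
      nhdsWithin_le_nhds
  obtain ⟨t, ⟨⟨hgt, hgt0⟩, hvt⟩, ht⟩ := (hdiag.eventually
    ((hgv.and hg0).and (hv.continuousAt.eventually_ne hv0)) |>.and self_mem_nhdsWithin).exists
  rw [hgt, mul_eq_zero, Finset.prod_eq_zero_iff] at hgt0
  obtain ⟨i, -, hi⟩ := hgt0.resolve_right hvt
  exact ht (eq_zero_of_pow_eq_zero hi)

theorem germDvd (hg : HasExponent g α) (hh : HasExponent h β) (hαβ : α ≤ β) : GermDvd g h := by
  obtain ⟨v, hv, hv0, hgv⟩ := hg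
  obtain ⟨w, hw, -, hhw⟩ := hh
  refine ⟨fun y => (∏ i, y i ^ (β i - α i)) * (w y / v y),
    (analyticAt_monomial _ 0).fun_mul (hw.fun_div hv hv0), ?_⟩
  filter_upwards [hgv, hhw, hv.continuousAt.eventually_ne hv0] with y hgy hhy hvy
  have hmonomial : ∏ i, y i ^ β i = (∏ i, y i ^ (β i - α i)) * ∏ i, y i ^ α i := by
    rw [← Finset.prod_mul_distrib]
    exact Finset.prod_congr rfl fun i _ => (pow_sub_mul_pow _ (hαβ i)).symm
  rw [hgy, hhy, hmonomial]
  field_simp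

end HasExponent

namespace IsMonomialGerm

theorem analyticAt (hg : IsMonomialGerm g) : AnalyticAt ℂ g 0 :=
  hg.elim fun _ hα => hα.analyticAt

theorem congr (hg : IsMonomialGerm g) (hgh : ∀ᶠ y in 𝓝 0, h y = g y) : IsMonomialGerm h :=
  hg.imp fun _ hα => hα.congr hgh

theorem of_ne_zero (hg : AnalyticAt ℂ g 0) (hg0 : g 0 ≠ 0) : IsMonomialGerm g :=
  ⟨0, .of_ne_zero hg hg0⟩

theorem coord (i : Fin n) : IsMonomialGerm (fun y : Fin n → ℂ => y i) :=
  ⟨_, .coord i⟩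

theorem mul (hg : IsMonomialGerm g) (hh : IsMonomialGerm h) :
    IsMonomialGerm (fun y => g y * h y) :=
  hg.elim fun _ hα => hh.elim fun _ hβ => ⟨_, hα.mul hβ⟩

theorem pow (hg : IsMonomialGerm g) (k : ℕ) : IsMonomialGerm (fun y => g y ^ k) :=
  hg.elim fun _ hα => ⟨_, hα.pow k⟩

theorem comp (hg : IsMonomialGerm g) (hφ : AnalyticAt ℂ φ 0) (hφ0 : φ 0 = 0)
    (hM : ∀ i, IsMonomialGerm (fun y => φ y i)) : IsMonomialGerm (fun y => g (φ y)) := by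
  choose M hM using hM
  exact hg.elim fun _ hα => ⟨_, hα.comp hφ hφ0 hM⟩

theorem not_eventually_eq_zero (hg : IsMonomialGerm g) : ¬ ∀ᶠ y in 𝓝 0, g y = 0 :=
  hg.elim fun _ hα => hα.not_eventually_eq_zero

end IsMonomialGerm

namespace GermDvd

variable {k : (Fin n → ℂ) → ℂ}

theorem refl (g : (Fin n → ℂ) → ℂ) : GermDvd g g :=
  ⟨1, analyticAt_const, by simp⟩

theorem trans (hgh : GermDvd g h) (hhk : GermDvd h k) : GermDvd g k := by
  obtain ⟨q, hq, hgq⟩ := hgh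
  obtain ⟨r, hr, hhr⟩ := hhk
  refine ⟨fun y => r y * q y, hr.fun_mul hq, ?_⟩
  filter_upwards [hgq, hhr] with y hgy hhy
  rw [hhy, hgy, mul_assoc]

theorem comp (hgh : GermDvd g h) (hφ : AnalyticAt ℂ φ 0) (hφ0 : φ 0 = 0) :
    GermDvd (fun y => g (φ y)) (fun y => h (φ y)) := by
  obtain ⟨q, hq, hgq⟩ := hgh
  exact ⟨fun y => q (φ y), hq.fun_comp_of_eq hφ hφ0,
    (tendsto_zero_of_analyticAt hφ hφ0).eventually hgq⟩

end GermDvd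

theorem analyticAt_update {c : Fin n → ℂ} (hg : AnalyticAt ℂ g c) (i : Fin n) :
    AnalyticAt ℂ (fun y => Function.update y i (g y)) c := by
  refine analyticAt_pi_iff.2 fun j => ?_
  rcases eq_or_ne j i with rfl | hj
  · simpa using hg
  · simpa [hj] using analyticAt_coord j c

theorem germDvd_coord_of_eventually_update_eq_zero (hg : AnalyticAt ℂ g 0) (i : Fin n)
    (hg0 : ∀ᶠ y in 𝓝 0, g (Function.update y i 0) = 0) : GermDvd (fun y => y i) g := by
  obtain ⟨q, hq, hgq⟩ := exists_analyticAt_eq_update_add_smul hg i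
  refine ⟨q, hq, ?_⟩
  filter_upwards [hgq, hg0] with y hgy hgy0
  simpa [hgy0, mul_comm] using hgy

theorem germDvd_coord_or_of_mul (hg : AnalyticAt ℂ g 0) (hh : AnalyticAt ℂ h 0) (i : Fin n)
    (hgh : GermDvd (fun y => y i) fun y => g y * h y) :
    GermDvd (fun y => y i) g ∨ GermDvd (fun y => y i) h := by
  obtain ⟨q, -, hq⟩ := hgh
  have hproj := analyticAt_update (analyticAt_const (x := (0 : Fin n → ℂ)) (v := (0 : ℂ))) i
  have hproj0 : Function.update (0 : Fin n → ℂ) i 0 = 0 := Function.update_eq_self i _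
  have hmul : ∀ᶠ y in 𝓝 0, g (Function.update y i 0) * h (Function.update y i 0) = 0 :=
    ((tendsto_zero_of_analyticAt hproj hproj0).eventually hq).mono fun y hy => by
      simpa using hy
  exact (eventually_eq_zero_or_eq_zero_of_mul (hg.fun_comp_of_eq hproj hproj0)
    (hh.fun_comp_of_eq hproj hproj0) hmul).imp
    (germDvd_coord_of_eventually_update_eq_zero hg i)
    (germDvd_coord_of_eventually_update_eq_zero hh i)

theorem prod_pow_add_single (α : Fin n → ℕ) (i : Fin n) (y : Fin n → ℂ) :
    ∏ j, y j ^ (α + Pi.single i 1 : Fin n → ℕ) j = (∏ j, y j ^ α j) * y i := by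
  simp only [Pi.add_apply, pow_add, Finset.prod_mul_distrib]
  simp [Pi.single_apply]

/- Each coordinate is prime, so the coordinates dividing the monomial can be cancelled in turn. -/
theorem IsMonomialGerm.of_mul (hg : AnalyticAt ℂ g 0) (hh : AnalyticAt ℂ h 0)
    (hgh : IsMonomialGerm (fun y => g y * h y)) : IsMonomialGerm g := by
  obtain ⟨α, hα⟩ := hgh
  induction hN : ∑ i, α i generalizing g h α with
  | zero =>
    obtain ⟨v, -, hv0, hghv⟩ := hα
    have hα0 : ∀ i, α i = 0 := by simpa using hN
    have hgh0 : g 0 * h 0 = v 0 := by simpa [hα0] using hghv.self_of_nhds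
    exact .of_ne_zero hg (left_ne_zero_of_mul (hgh0.trans_ne hv0))
  | succ N ih =>
    obtain ⟨v, hv, hv0, hghv⟩ := hα
    obtain ⟨i, -, hi⟩ := Finset.exists_ne_zero_of_sum_ne_zero (hN.trans_ne N.succ_ne_zero)
    obtain ⟨β, rfl⟩ : ∃ β, α = β + Pi.single i 1 :=
      ⟨α - Pi.single i 1, (tsub_add_cancel_of_le fun j => by
        rcases eq_or_ne j i with rfl | hj <;> simp_all [Nat.one_le_iff_ne_zero]).symm⟩
    have hβ : ∑ i, β i = N := by simpa [Finset.sum_add_distrib] using hN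
    simp only [prod_pow_add_single] at hghv
    have hdvd : GermDvd (fun y => y i) fun y => g y * h y :=
      ⟨_, (analyticAt_monomial β 0).fun_mul hv, hghv.mono fun y hy => by
        simp only [hy]; ring⟩
    have hcancel : ∀ {a b : (Fin n → ℂ) → ℂ}, AnalyticAt ℂ a 0 → AnalyticAt ℂ b 0 →
        (∀ᶠ y in 𝓝 0, g y * h y = y i * (a y * b y)) → HasExponent (fun y => a y * b y) β :=
      fun ha hb hab => ⟨v, hv, hv0, eventually_eq_of_mul_eq_mul_left (analyticAt_coord i 0)
        (IsMonomialGerm.coord i).not_eventually_eq_zero (ha.fun_mul hb)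
        ((analyticAt_monomial β 0).fun_mul hv)
        (by filter_upwards [hab, hghv] with y hab hghv; rw [← hab, hghv]; ring)⟩
    rcases germDvd_coord_or_of_mul hg hh i hdvd with ⟨q, hq, hgq⟩ | ⟨q, hq, hhq⟩
    · exact ((ih hq hh β (hcancel hq hh (hgq.mono fun y hy => by rw [hy]; ring)) hβ).mul
        (.coord i)).congr hgq
    · exact ih hg hq β (hcancel hg hq (hhq.mono fun y hy => by rw [hy]; ring)) hβ

theorem IsMonomialGerm.of_prod {κ : Type*} {s : Finset κ} {f : κ → (Fin n → ℂ) → ℂ}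
    (hf : ∀ k ∈ s, AnalyticAt ℂ (f k) 0) (hprod : IsMonomialGerm fun y => ∏ k ∈ s, f k y) {k : κ}
    (hk : k ∈ s) : IsMonomialGerm (f k) := by
  classical
  simp only [← Finset.mul_prod_erase s _ hk] at hprod
  exact .of_mul (hf k hk)
    (Finset.analyticAt_fun_prod _ fun j hj => hf j (Finset.mem_of_mem_erase hj)) hprod

end Monomials

/-! ### Charts along an ultrafilter -/

section Charts

variable {n : ℕ}

/-- A holomorphic substitution `φ` fixing the origin, through which the ultrafilter `𝓤` lifts to an
ultrafilter `𝓥` converging to the origin. Lifting one ultrafilter replaces the choice of the chart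
of a blow-up that contains a given point. -/
structure IsChart (φ : (Fin n → ℂ) → Fin n → ℂ) (𝓤 𝓥 : Ultrafilter (Fin n → ℂ)) : Prop where
  analyticAt : AnalyticAt ℂ φ 0
  map_zero : φ 0 = 0
  le_nhds : (𝓥 : Filter (Fin n → ℂ)) ≤ 𝓝 0
  map_eq : 𝓥.map φ = 𝓤

/-- A chart whose components are monomials times units. -/
structure IsMonomialChart (φ : (Fin n → ℂ) → Fin n → ℂ) (𝓤 𝓥 : Ultrafilter (Fin n → ℂ)) : Prop
    extends IsChart φ 𝓤 𝓥 where
  isMonomialGerm (k : Fin n) : IsMonomialGerm fun y => φ y k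

variable {φ ψ : (Fin n → ℂ) → Fin n → ℂ} {𝓤 𝓥 𝓦 : Ultrafilter (Fin n → ℂ)}
  {f g h m r : (Fin n → ℂ) → ℂ} {α β : Fin n → ℕ}

theorem IsChart.id (h𝓤 : (𝓤 : Filter (Fin n → ℂ)) ≤ 𝓝 0) : IsChart (fun y => y) 𝓤 𝓤 :=
  ⟨analyticAt_id, rfl, h𝓤, 𝓤.map_id⟩

theorem IsChart.comp (hφ : IsChart φ 𝓤 𝓥) (hψ : IsChart ψ 𝓥 𝓦) :
    IsChart (fun y => φ (ψ y)) 𝓤 𝓦 where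
  analyticAt := hφ.analyticAt.fun_comp_of_eq hψ.analyticAt hψ.map_zero
  map_zero := by rw [hψ.map_zero, hφ.map_zero]
  le_nhds := hψ.le_nhds
  map_eq := by rw [← hφ.map_eq, ← hψ.map_eq, Ultrafilter.map_map]; rfl

theorem IsChart.tendsto_nhds (hφ : IsChart φ 𝓤 𝓥) : Tendsto φ (𝓝 0) (𝓝 0) :=
  tendsto_zero_of_analyticAt hφ.analyticAt hφ.map_zero

theorem IsMonomialChart.id (h𝓤 : (𝓤 : Filter (Fin n → ℂ)) ≤ 𝓝 0) :
    IsMonomialChart (fun y => y) 𝓤 𝓤 :=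
  ⟨.id h𝓤, .coord⟩

theorem IsMonomialChart.comp_isMonomialGerm (hφ : IsMonomialChart φ 𝓤 𝓥) (hg : IsMonomialGerm g) :
    IsMonomialGerm fun y => g (φ y) :=
  hg.comp hφ.analyticAt hφ.map_zero hφ.isMonomialGerm

theorem IsMonomialChart.comp (hφ : IsMonomialChart φ 𝓤 𝓥) (hψ : IsMonomialChart ψ 𝓥 𝓦) :
    IsMonomialChart (fun y => φ (ψ y)) 𝓤 𝓦 :=
  ⟨hφ.toIsChart.comp hψ.toIsChart, fun k => hψ.comp_isMonomialGerm (hφ.isMonomialGerm k)⟩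

theorem isChart_of_eventually_rightInverse (hφ : AnalyticAt ℂ φ 0) (hφ0 : φ 0 = 0)
    {ρ : (Fin n → ℂ) → Fin n → ℂ} (hρ : Tendsto ρ 𝓤 (𝓝 0)) (hφρ : ∀ᶠ y in 𝓤, φ (ρ y) = y) :
    IsChart φ 𝓤 (𝓤.map ρ) where
  analyticAt := hφ
  map_zero := hφ0
  le_nhds := hρ
  map_eq := (Ultrafilter.map_map ..).trans
    (Ultrafilter.coe_injective ((map_congr hφρ).trans map_id))

theorem isChart_update (h𝓤 : (𝓤 : Filter (Fin n → ℂ)) ≤ 𝓝 0) (hg : AnalyticAt ℂ g 0)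
    (hg0 : g 0 = 0) (i : Fin n) (hr : Tendsto r 𝓤 (𝓝 0))
    (hgr : ∀ᶠ y in 𝓤, g (Function.update y i (r y)) = y i) :
    IsChart (fun y => Function.update y i (g y)) 𝓤 (𝓤.map fun y => Function.update y i (r y)) := by
  have h0 : Function.update (0 : Fin n → ℂ) i 0 = 0 := Function.update_eq_self i _
  refine isChart_of_eventually_rightInverse (analyticAt_update hg i) (by rw [hg0, h0])
    (by simpa only [h0, id] using (tendsto_id'.2 h𝓤).update i hr) ?_
  filter_upwards [hgr] with y hy
  simp [hy]

theorem HasExponent.comp_update (hf : HasExponent f α) {μ : Fin n → ℕ} (hg : HasExponent g μ)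
    (hg0 : g 0 = 0) (i : Fin n) :
    HasExponent (fun y => f (Function.update y i (g y))) (Function.update α i 0 + α i • μ) := by
  have hcoord : ∀ k, HasExponent (fun y => Function.update y i (g y) k)
      (Function.update (fun k => (Pi.single k 1 : Fin n → ℕ)) i μ k) := by
    intro k
    rcases eq_or_ne k i with rfl | hk
    · simpa using hg
    · simpa [hk] using HasExponent.coord k
  convert hf.comp (analyticAt_update hg.analyticAt i)
    (by rw [hg0]; exact Function.update_eq_self i _) hcoord using 1
  rw [← Finset.sum_erase_add _ _ (Finset.mem_univ i), Function.update_self]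
  congr 1
  ext k
  rw [Finset.sum_apply, Finset.sum_congr rfl (g := fun j => if k = j then α j else 0)]
  · rcases eq_or_ne k i with rfl | hk <;> simp [*]
  · intro j hj
    simp [Finset.ne_of_mem_erase hj, Pi.single_apply]

theorem isMonomialChart_update {μ : Fin n → ℕ} (hg : HasExponent g μ) {i : Fin n}
    (hφ : IsChart (fun y => Function.update y i (g y)) 𝓤 𝓥) :
    IsMonomialChart (fun y => Function.update y i (g y)) 𝓤 𝓥 := by
  refine ⟨hφ, fun k => ?_⟩
  rcases eq_or_ne k i with rfl | hk
  · simpa using ⟨μ, hg⟩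
  · simpa [hk] using IsMonomialGerm.coord k

theorem tendsto_cpow_inv_nat {N : ℕ} (hN : N ≠ 0) :
    Tendsto (fun z : ℂ => z ^ (N : ℂ)⁻¹) (𝓝 0) (𝓝 0) := by
  have hre : 0 < ((N : ℂ)⁻¹).re := by
    rw [← Complex.ofReal_natCast, ← Complex.ofReal_inv, Complex.ofReal_re]
    positivity
  simpa only [Complex.zero_cpow (inv_ne_zero (Nat.cast_ne_zero.2 hN))] using
    (Complex.continuousAt_cpow_const_of_re_pos (z := 0) (.inl le_rfl) hre).tendsto

theorem exists_isMonomialChart_pow (h𝓤 : (𝓤 : Filter (Fin n → ℂ)) ≤ 𝓝 0) {N : Fin n → ℕ}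
    (hN : ∀ k, N k ≠ 0) : ∃ φ 𝓥, IsMonomialChart φ 𝓤 𝓥 ∧
      ∀ f α, HasExponent f α → HasExponent (fun y => f (φ y)) (α * N) := by
  have hφ : AnalyticAt ℂ (fun (y : Fin n → ℂ) k => y k ^ N k) 0 :=
    analyticAt_pi_iff.2 fun k => (analyticAt_coord k 0).fun_pow _
  have hφ0 : (fun k => (0 : Fin n → ℂ) k ^ N k) = 0 := funext fun k => zero_pow (hN k)
  have hcoord : ∀ k, HasExponent (fun y : Fin n → ℂ => y k ^ N k) (N k • Pi.single k 1) :=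
    fun k => (HasExponent.coord k).pow _
  refine ⟨_, _, ⟨isChart_of_eventually_rightInverse (ρ := fun y k => y k ^ (N k : ℂ)⁻¹)
    hφ hφ0 ?_ ?_, fun k => ⟨_, hcoord k⟩⟩, fun f α hf => ?_⟩
  · exact tendsto_pi_nhds.2 fun k => (tendsto_cpow_inv_nat (hN k)).comp
      (((continuous_apply k).tendsto' 0 0 rfl).mono_left h𝓤)
  · exact Eventually.of_forall fun y => funext fun k => Complex.cpow_nat_inv_pow _ (hN k)
  · convert hf.comp hφ hφ0 hcoord using 1
    ext k
    simp [Pi.single_apply]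

theorem exists_tendsto_of_eventually_norm_le {X : Type*} {𝓧 : Ultrafilter X} {a : X → ℂ} {C : ℝ}
    (ha : ∀ᶠ x in 𝓧, ‖a x‖ ≤ C) : ∃ c, Tendsto a 𝓧 (𝓝 c) := by
  obtain ⟨c, -, hc⟩ := (isCompact_closedBall (0 : ℂ) C).ultrafilter_le_nhds (𝓧.map a)
    (le_principal_iff.2 (ha.mono fun x hx => mem_closedBall_zero_iff.2 hx))
  exact ⟨c, hc⟩

theorem exists_isChart_mul_add (h𝓤 : (𝓤 : Filter (Fin n → ℂ)) ≤ 𝓝 0) {i : Fin n}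
    (hm : AnalyticAt ℂ m 0) (hm0 : m 0 = 0) (hmi : ∀ y z, m (Function.update y i z) = m y)
    {C : ℝ} (hC : ∀ᶠ y in 𝓤, ‖y i‖ ≤ C * ‖m y‖) :
    ∃ c 𝓥, IsChart (fun y => Function.update y i (m y * (c + y i))) 𝓤 𝓥 := by
  obtain ⟨c, hc⟩ := exists_tendsto_of_eventually_norm_le (𝓧 := 𝓤) (a := fun y => y i / m y)
    (C := |C|) (by
      filter_upwards [hC] with y hy
      rw [norm_div]
      exact div_le_of_le_mul₀ (norm_nonneg _) (abs_nonneg C)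
        (hy.trans (by gcongr; exact le_abs_self C)))
  refine ⟨c, _, isChart_update h𝓤 (hm.fun_mul (analyticAt_const.fun_add (analyticAt_coord i 0)))
    (by rw [hm0, zero_mul]) i (sub_self c ▸ hc.sub_const c) ?_⟩
  filter_upwards [hC] with y hy
  rcases eq_or_ne (m y) 0 with hmy | hmy
  · have hyi : y i = 0 := by simpa [hmy] using hy
    simp [hmi, hmy, hyi]
  · simp [hmi, mul_div_cancel₀ _ hmy]

theorem exists_hasExponent_const_add_coord (c : ℂ) (i : Fin n) :
    ∃ δ : ℕ, HasExponent (fun y => c + y i) (Pi.single i δ) := by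
  rcases eq_or_ne c 0 with rfl | hc
  · exact ⟨1, by simpa using HasExponent.coord i⟩
  · refine ⟨0, ?_⟩
    rw [Pi.single_zero]
    exact .of_ne_zero (analyticAt_const.fun_add (analyticAt_coord i 0)) (by simpa using hc)

/- With equal partial degrees in `y i` and `y j`, the blow-up `y i = y j * (c + y i')` makes the two
exponents of `y j` equal. -/
theorem exists_isMonomialChart_card_lt (h𝓤 : (𝓤 : Filter (Fin n → ℂ)) ≤ 𝓝 0)
    (hg : HasExponent g α) (hh : HasExponent h β) {i j : Fin n} (hi : α i ≠ β i) (hj : α j ≠ β j)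
    (hsum : α i + α j = β i + β j) (hle : ∀ᶠ y : Fin n → ℂ in 𝓤, ‖y i‖ ≤ ‖y j‖) :
    ∃ φ 𝓥 α' β', IsMonomialChart φ 𝓤 𝓥 ∧ HasExponent (fun y => g (φ y)) α' ∧
      HasExponent (fun y => h (φ y)) β' ∧
      Finset.card {k | α' k ≠ β' k} < Finset.card {k | α k ≠ β k} := by
  have hij : j ≠ i := by
    rintro rfl
    omega
  obtain ⟨c, 𝓥, hφ⟩ := exists_isChart_mul_add h𝓤 (m := fun y => y j) (C := 1)
    (analyticAt_coord j 0) rfl (fun y z => Function.update_of_ne hij _ _) (by simpa using hle)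
  obtain ⟨δ, hδ⟩ := exists_hasExponent_const_add_coord c i
  have hsubst := (HasExponent.coord j).mul hδ
  refine ⟨_, 𝓥, _, _, isMonomialChart_update hsubst hφ, hg.comp_update hsubst (by simp) i,
    hh.comp_update hsubst (by simp) i, Finset.card_lt_card (Finset.ssubset_iff_of_subset ?_ |>.2
      ⟨j, by simpa using hj, ?_⟩)⟩
  · intro k hk
    rcases eq_or_ne k i with rfl | hki
    · simpa using hi
    · rcases eq_or_ne k j with rfl | hkj
      · simpa using hj
      · simpa [hki, hkj] using hk
  · simp [hij]
    omega

theorem exists_isMonomialChart_germDvd_or (h𝓤 : (𝓤 : Filter (Fin n → ℂ)) ≤ 𝓝 0)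
    (hg : IsMonomialGerm g) (hh : IsMonomialGerm h) : ∃ φ 𝓥, IsMonomialChart φ 𝓤 𝓥 ∧
      (GermDvd (fun y => g (φ y)) (fun y => h (φ y)) ∨
        GermDvd (fun y => h (φ y)) (fun y => g (φ y))) := by
  obtain ⟨α, hg⟩ := hg
  obtain ⟨β, hh⟩ := hh
  induction hN : Finset.card {k | α k ≠ β k} using Nat.strong_induction_on
    generalizing 𝓤 g h α β with
  | _ N ih =>
    by_cases hαβ : α ≤ β
    · exact ⟨_, 𝓤, .id h𝓤, .inl (hg.germDvd hh hαβ)⟩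
    by_cases hβα : β ≤ α
    · exact ⟨_, 𝓤, .id h𝓤, .inr (hh.germDvd hg hβα)⟩
    obtain ⟨i, hi⟩ : ∃ i, β i < α i := by simpa [Pi.le_def] using hαβ
    obtain ⟨j, hj⟩ : ∃ j, α j < β j := by simpa [Pi.le_def] using hβα
    have hij : j ≠ i := by rintro rfl; exact lt_asymm hi hj
    set A : Fin n → ℕ := Function.update (fun _ => α i - β i) i (β j - α j) with hA
    have hA0 : ∀ k, A k ≠ 0 := fun k => by
      simp only [hA, Function.update_apply]
      split_ifs <;> omega
    obtain ⟨φ, 𝓥, hφ, hpow⟩ := exists_isMonomialChart_pow h𝓤 hA0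
    have hAi : A i = β j - α j := Function.update_self ..
    have hAj : A j = α i - β i := Function.update_of_ne hij ..
    have hi' : (α * A) i ≠ (β * A) i := by simp [hA0, hi.ne']
    have hj' : (α * A) j ≠ (β * A) j := by simp [hA0, hj.ne]
    have hsum : (α * A) i + (α * A) j = (β * A) i + (β * A) j := by
      simp only [Pi.mul_apply, hAi, hAj]
      zify [hi.le, hj.le]
      ring
    have hcard : Finset.card {k | (α * A) k ≠ (β * A) k} = N := by simpa [hA0] using hN
    obtain ⟨ψ, 𝓦, α', β', hψ, hα', hβ', hlt⟩ : ∃ ψ 𝓦 α' β', IsMonomialChart ψ 𝓥 𝓦 ∧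
        HasExponent (fun y => g (φ (ψ y))) α' ∧ HasExponent (fun y => h (φ (ψ y))) β' ∧
        Finset.card {k | α' k ≠ β' k} < N := by
      rw [← hcard]
      rcases Ultrafilter.eventually_or.1 (Eventually.of_forall fun y : Fin n → ℂ =>
        le_total ‖y i‖ ‖y j‖) with hle | hle
      · exact exists_isMonomialChart_card_lt hφ.le_nhds (hpow g α hg) (hpow h β hh) hi' hj' hsum hle
      · exact exists_isMonomialChart_card_lt hφ.le_nhds (hpow g α hg) (hpow h β hh) hj' hi'
          (by omega) hle
    obtain ⟨χ, 𝓧, hχ, hdvd⟩ := ih _ hlt hψ.le_nhds α' hα' β' hβ' rfl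
    exact ⟨_, 𝓧, (hφ.comp hψ).comp hχ, hdvd⟩

theorem exists_isMonomialChart_germDvd {κ : Type*} {s : Finset κ} (hs : s.Nonempty)
    {g : κ → (Fin n → ℂ) → ℂ} (hg : ∀ k ∈ s, IsMonomialGerm (g k))
    (h𝓤 : (𝓤 : Filter (Fin n → ℂ)) ≤ 𝓝 0) : ∃ φ 𝓥, IsMonomialChart φ 𝓤 𝓥 ∧
      ∃ k₀ ∈ s, ∀ k ∈ s, GermDvd (fun y => g k₀ (φ y)) (fun y => g k (φ y)) := by
  induction hs using Finset.Nonempty.cons_induction generalizing 𝓤 with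
  | singleton k => exact ⟨_, 𝓤, .id h𝓤, by simp [GermDvd.refl]⟩
  | cons k s hk _ ih =>
    simp only [Finset.mem_cons, forall_eq_or_imp, exists_eq_or_imp] at hg ⊢
    obtain ⟨φ, 𝓥, hφ, k₀, hk₀, hdvd⟩ := ih hg.2 h𝓤
    obtain ⟨ψ, 𝓦, hψ, hor⟩ := exists_isMonomialChart_germDvd_or hφ.le_nhds
      (hφ.comp_isMonomialGerm hg.1) (hφ.comp_isMonomialGerm (hg.2 k₀ hk₀))
    have hdvd' := fun l hl => (hdvd l hl).comp hψ.analyticAt hψ.map_zero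
    refine ⟨_, 𝓦, hφ.comp hψ, hor.imp (fun h => ⟨.refl _, fun l hl => h.trans (hdvd' l hl)⟩)
      fun h => ⟨k₀, hk₀, h, hdvd'⟩⟩

end Charts

/-! ### Expansion in one coordinate and the Tschirnhaus shift -/

section Expansion

variable {n d : ℕ} {f h : (Fin (n + 1) → ℂ) → ℂ}

theorem analyticAt_tail (y : Fin (n + 1) → ℂ) :
    AnalyticAt ℂ (fun y : Fin (n + 1) → ℂ => Fin.tail y) y :=
  analyticAt_pi_iff.2 fun i => analyticAt_coord i.succ y

theorem analyticAt_cons {E : Type*} [NormedAddCommGroup E] [NormedSpace ℂ E] {g : E → ℂ}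
    {φ : E → Fin n → ℂ} {x : E} (hg : AnalyticAt ℂ g x) (hφ : AnalyticAt ℂ φ x) :
    AnalyticAt ℂ (fun y => (Fin.cons (g y) (φ y) : Fin (n + 1) → ℂ)) x :=
  analyticAt_pi_iff.2 (Fin.cases hg fun i => analyticAt_pi_iff.1 hφ i)

theorem cons_zero_zero : (Fin.cons 0 0 : Fin (n + 1) → ℂ) = 0 :=
  Fin.cons_self_tail (0 : Fin (n + 1) → ℂ)

theorem cons_tail_eq_update (y : Fin (n + 1) → ℂ) (t : ℂ) :
    (Fin.cons t (Fin.tail y) : Fin (n + 1) → ℂ) = Function.update y 0 t := by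
  rw [← Fin.update_cons_zero (y 0), Fin.cons_self_tail]

theorem hasDerivAt_cons (t : ℂ) (x : Fin n → ℂ) :
    HasDerivAt (fun s => (Fin.cons s x : Fin (n + 1) → ℂ)) (Pi.single 0 1) t := by
  convert hasDerivAt_update (Fin.cons t x : Fin (n + 1) → ℂ) 0 t using 2 with s
  exact (Fin.update_cons_zero (α := fun _ => ℂ) t x s).symm

/-- The derivative in the direction of the coordinate `0`. -/
noncomputable def derivZero (f : (Fin (n + 1) → ℂ) → ℂ) (y : Fin (n + 1) → ℂ) : ℂ :=
  fderiv ℂ f y (Pi.single 0 1)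

theorem analyticAt_derivZero {y : Fin (n + 1) → ℂ} (hf : AnalyticAt ℂ f y) :
    AnalyticAt ℂ (derivZero f) y :=
  ((ContinuousLinearMap.apply ℂ ℂ (Pi.single 0 1 : Fin (n + 1) → ℂ)).analyticAt _).comp hf.fderiv

theorem analyticAt_iterate_derivZero {y : Fin (n + 1) → ℂ} (hf : AnalyticAt ℂ f y) (k : ℕ) :
    AnalyticAt ℂ (derivZero^[k] f) y := by
  induction k generalizing f with
  | zero => exact hf
  | succ _ ih => exact ih (analyticAt_derivZero hf)

theorem iteratedDeriv_cons {t : ℂ} {x : Fin n → ℂ} (hf : AnalyticAt ℂ f (Fin.cons t x)) (k : ℕ) :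
    iteratedDeriv k (fun s => f (Fin.cons s x)) t = derivZero^[k] f (Fin.cons t x) := by
  induction k generalizing f with
  | zero => simp
  | succ k ih =>
    have hline : ContinuousAt (fun s : ℂ => (Fin.cons s x : Fin (n + 1) → ℂ)) t :=
      (analyticAt_cons analyticAt_id analyticAt_const).continuousAt
    have hderiv : deriv (fun s => f (Fin.cons s x)) =ᶠ[𝓝 t]
        fun s => derivZero f (Fin.cons s x) := by
      filter_upwards [hline.eventually hf.eventually_analyticAt] with s hs
      exact (hs.differentiableAt.hasFDerivAt.comp_hasDerivAt s (hasDerivAt_cons s x)).deriv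
    rw [iteratedDeriv_succ', Function.iterate_succ_apply, hderiv.iteratedDeriv_eq,
      ih (analyticAt_derivZero hf)]

theorem exists_implicit (hh : AnalyticAt ℂ h 0) (hh0 : h 0 = 0) (hd : derivZero h 0 ≠ 0) :
    ∃ θ : (Fin n → ℂ) → ℂ, AnalyticAt ℂ θ 0 ∧ θ 0 = 0 ∧
      ∀ᶠ x in 𝓝 0, h (Fin.cons (θ x) x) = 0 := by
  set G : (Fin n → ℂ) × ℂ → ℂ := fun p => h (Fin.cons p.2 p.1)
  have hG_analytic : AnalyticAt ℂ G (0, 0) :=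
    hh.fun_comp_of_eq (analyticAt_cons analyticAt_snd analyticAt_fst) cons_zero_zero
  have hG_zero : G (0, 0) = 0 := (congrArg h cons_zero_zero).trans hh0
  have hderiv : fderiv ℂ G (0, 0) (0, 1) = derivZero h 0 := by
    have hline : HasDerivAt (fun t : ℂ => ((0 : Fin n → ℂ), t)) (0, 1) 0 :=
      (hasDerivAt_const _ _).prodMk (hasDerivAt_id _)
    have hcomp := (hG_analytic.differentiableAt.hasFDerivAt.comp_hasDerivAt (0 : ℂ) hline).deriv
    rw [← cons_zero_zero] at hh ⊢
    rw [← hcomp, ← Function.iterate_one derivZero, ← iteratedDeriv_cons hh 1, iteratedDeriv_one]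
    rfl
  have hinv : (fderiv ℂ G (0, 0) ∘L .inr ℂ (Fin n → ℂ) ℂ).IsInvertible := by
    refine ⟨ContinuousLinearEquiv.unitsEquivAut ℂ (Units.mk0 _ (hderiv.trans_ne hd)), ?_⟩
    ext
    simp
  have hcd : ContDiffAt ℂ ⊤ G (0, 0) := hG_analytic.contDiffAt
  have htop : (⊤ : WithTop ℕ∞) ≠ 0 := by simp
  refine ⟨hcd.implicitFunction htop hinv, ?_, ?_, ?_⟩
  · exact (hcd.contDiffAt_implicitFunction htop hinv).analyticAt
  · exact hcd.implicitFunction_apply_self htop hinv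
  · exact (hcd.eventually_apply_implicitFunction htop hinv).mono fun x hx => hx.trans hG_zero

theorem exists_expansion (d : ℕ) (hf : AnalyticAt ℂ f 0) :
    ∃ (c : ℕ → (Fin n → ℂ) → ℂ) (U : (Fin (n + 1) → ℂ) → ℂ), (∀ i, AnalyticAt ℂ (c i) 0) ∧
      AnalyticAt ℂ U 0 ∧ ∀ᶠ y in 𝓝 0,
        f y = ∑ i ∈ Finset.range d, c i (Fin.tail y) * y 0 ^ i + y 0 ^ d * U y := by
  induction d generalizing f with
  | zero => exact ⟨0, f, fun _ => analyticAt_const, hf, .of_forall fun y => by simp⟩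
  | succ d ih =>
    obtain ⟨q, hq, hfq⟩ := exists_analyticAt_eq_update_add_smul hf 0
    obtain ⟨c, U, hc, hU, hcU⟩ := ih hq
    have hc_zero : AnalyticAt ℂ (fun x : Fin n → ℂ => f (Fin.cons 0 x)) 0 :=
      hf.fun_comp_of_eq (analyticAt_cons analyticAt_const analyticAt_id) cons_zero_zero
    refine ⟨fun i => Nat.rec (fun x => f (Fin.cons 0 x)) (fun i _ => c i) i, U,
      (Nat.casesOn · hc_zero hc), hU, ?_⟩
    filter_upwards [hfq, hcU] with y hfy hqy
    rw [hfy, hqy, Finset.sum_range_succ']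
    change _ = _ + f (Fin.cons 0 (Fin.tail y)) * y 0 ^ 0 + _
    simp only [cons_tail_eq_update, Pi.zero_apply, sub_zero, smul_eq_mul, mul_add, Finset.mul_sum,
      pow_succ', pow_zero, mul_one, mul_left_comm, mul_assoc]
    ring

theorem iteratedDeriv_sum_add_pow_mul {g u : ℂ → ℂ} {a : ℕ → ℂ} (hu : AnalyticAt ℂ u 0)
    (hg : ∀ᶠ t in 𝓝 0, g t = ∑ i ∈ Finset.range d, a i * t ^ i + t ^ d * u t) {k : ℕ}
    (hk : k < d) : iteratedDeriv k g 0 = k.factorial * a k := by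
  have hpow : AnalyticAt ℂ (fun t : ℂ => t ^ d * u t) 0 := (analyticAt_id.pow d).mul hu
  have hrest : iteratedDeriv k (fun t => t ^ d * u t) 0 = 0 :=
    (natCast_le_analyticOrderAt_iff_iteratedDeriv_eq_zero hpow).1
      ((natCast_le_analyticOrderAt hpow).2 ⟨u, hu, .of_forall fun t => by simp⟩) k hk
  rw [Filter.EventuallyEq.iteratedDeriv_eq k hg, iteratedDeriv_fun_add (by fun_prop)
    hpow.contDiffAt, iteratedDeriv_fun_sum fun i _ => by fun_prop, hrest, add_zero]
  simp only [iteratedDeriv_const_mul_field, iteratedDeriv_fun_pow_zero]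
  simp [hk, mul_comm]

/-- Substituting `y 0 + θ` for the coordinate `y 0`, where `θ` depends on the other coordinates. -/
def shiftZero (θ : (Fin n → ℂ) → ℂ) (y : Fin (n + 1) → ℂ) : Fin (n + 1) → ℂ :=
  Function.update y 0 (y 0 + θ (Fin.tail y))

theorem eventually_iterate_derivZero_eq {θ : (Fin n → ℂ) → ℂ} {c : ℕ → (Fin n → ℂ) → ℂ}
    {U : (Fin (n + 1) → ℂ) → ℂ} (hf : AnalyticAt ℂ f 0) (hθ : AnalyticAt ℂ θ 0) (hθ0 : θ 0 = 0)
    (hU : AnalyticAt ℂ U 0) (hexp : ∀ᶠ y in 𝓝 0, f (shiftZero θ y) =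
      ∑ i ∈ Finset.range d, c i (Fin.tail y) * y 0 ^ i + y 0 ^ d * U y) {k : ℕ} (hk : k < d) :
    ∀ᶠ x in 𝓝 0, derivZero^[k] f (Fin.cons (θ x) x) = k.factorial * c k x := by
  have hgraph : Tendsto (fun x => (Fin.cons (θ x) x : Fin (n + 1) → ℂ)) (𝓝 0) (𝓝 0) :=
    tendsto_zero_of_analyticAt (analyticAt_cons hθ analyticAt_id) (by simp [hθ0, cons_zero_zero])
  have hplane : Tendsto (fun x => (Fin.cons 0 x : Fin (n + 1) → ℂ)) (𝓝 0) (𝓝 0) :=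
    tendsto_zero_of_analyticAt (analyticAt_cons analyticAt_const analyticAt_id) cons_zero_zero
  filter_upwards [hgraph.eventually hf.eventually_analyticAt,
    hplane.eventually hU.eventually_analyticAt, hplane.eventually hexp.eventually_nhds]
    with x hfx hUx hexp_x
  have hline : AnalyticAt ℂ (fun t : ℂ => (Fin.cons t x : Fin (n + 1) → ℂ)) 0 :=
    analyticAt_cons analyticAt_id analyticAt_const
  have hline_U : AnalyticAt ℂ (fun t : ℂ => U (Fin.cons t x)) 0 := hUx.fun_comp_of_eq hline rfl
  have hslice : ∀ᶠ t : ℂ in 𝓝 0, f (Fin.cons (t + θ x) x) =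
      ∑ i ∈ Finset.range d, c i x * t ^ i + t ^ d * U (Fin.cons t x) := by
    filter_upwards [hline.continuousAt.eventually hexp_x] with t ht
    simpa [shiftZero] using ht
  rw [← iteratedDeriv_sum_add_pow_mul hline_U hslice hk, ← iteratedDeriv_cons hfx,
    iteratedDeriv_comp_add_const (f := fun t => f (Fin.cons t x))]
  exact congrArg _ (zero_add _).symm

/- The shift `θ` parametrises the zeros of the `d`-th derivative in the coordinate `0`, so that the
coefficient of `y 0 ^ d` disappears. -/
theorem exists_tschirnhaus (hf : AnalyticAt ℂ f 0)
    (hd : analyticOrderAt (fun t => f (Fin.cons t 0)) 0 = (d + 1 : ℕ)) :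
    ∃ (θ : (Fin n → ℂ) → ℂ) (c : ℕ → (Fin n → ℂ) → ℂ) (U : (Fin (n + 1) → ℂ) → ℂ),
      AnalyticAt ℂ θ 0 ∧ θ 0 = 0 ∧ (∀ i, AnalyticAt ℂ (c i) 0) ∧ (∀ i < d, c i 0 = 0) ∧
      AnalyticAt ℂ U 0 ∧ U 0 ≠ 0 ∧ ∀ᶠ y in 𝓝 0, f (shiftZero θ y) =
        ∑ i ∈ Finset.range d, c i (Fin.tail y) * y 0 ^ i + y 0 ^ (d + 1) * U y := by
  have hslice : AnalyticAt ℂ (fun t : ℂ => f (Fin.cons t 0)) 0 :=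
    hf.fun_comp_of_eq (analyticAt_cons analyticAt_id analyticAt_const) cons_zero_zero
  have hiter (k : ℕ) : iteratedDeriv k (fun t => f (Fin.cons t 0)) 0 = derivZero^[k] f 0 := by
    rw [← cons_zero_zero] at hf ⊢
    exact iteratedDeriv_cons hf k
  obtain ⟨hlow, htop⟩ := (analyticOrderAt_eq_nat_iff_iteratedDeriv_eq_zero hslice).1 hd
  simp only [hiter] at hlow htop
  obtain ⟨θ, hθ, hθ0, hzero⟩ := exists_implicit (analyticAt_iterate_derivZero hf d)
    (hlow d d.lt_succ_self) (by rwa [← Function.iterate_succ_apply' derivZero])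
  have hshift : AnalyticAt ℂ (shiftZero θ) 0 :=
    analyticAt_update ((analyticAt_coord 0 _).add (hθ.fun_comp_of_eq (analyticAt_tail 0) rfl)) 0
  have hshift0 : shiftZero θ (0 : Fin (n + 1) → ℂ) = 0 := by
    simp [shiftZero, show Fin.tail (0 : Fin (n + 1) → ℂ) = 0 from rfl, hθ0]
  obtain ⟨c, U, hc, hU, hexp⟩ := exists_expansion (d + 2) (hf.fun_comp_of_eq hshift hshift0)
  have hcoeff (k : ℕ) (hk : k < d + 2) := eventually_iterate_derivZero_eq hf hθ hθ0 hU hexp hk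
  have hcoeff0 (k : ℕ) (hk : k < d + 2) : derivZero^[k] f 0 = k.factorial * c k 0 := by
    simpa [hθ0, cons_zero_zero] using (hcoeff k hk).self_of_nhds
  refine ⟨θ, c, fun y => c (d + 1) (Fin.tail y) + y 0 * U y, hθ, hθ0, hc, fun i hi => ?_,
    ((hc _).fun_comp_of_eq (analyticAt_tail 0) rfl).add ((analyticAt_coord 0 _).mul hU), ?_, ?_⟩
  · have := hcoeff0 i (by lia)
    simpa [hlow i (by lia), Nat.factorial_ne_zero] using this
  · intro h0
    have hc0 : c (d + 1) 0 = 0 := by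
      simpa [show Fin.tail (0 : Fin (n + 1) → ℂ) = 0 from rfl] using h0
    exact htop (by rw [hcoeff0 (d + 1) (by lia), hc0, mul_zero])
  · have hcd : ∀ᶠ x in 𝓝 0, c d x = 0 := by
      filter_upwards [hcoeff d (by lia), hzero] with x hx hx'
      simpa [hx', Nat.factorial_ne_zero] using hx
    have htail : Tendsto (Fin.tail : (Fin (n + 1) → ℂ) → Fin n → ℂ) (𝓝 0) (𝓝 0) :=
      (analyticAt_tail 0).continuousAt
    filter_upwards [hexp, htail.eventually hcd] with y hy hcy
    rw [hy, Finset.sum_range_succ, Finset.sum_range_succ, hcy]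
    ring

end Expansion

/-! ### Local monomialization -/

section Monomialization

variable {n d : ℕ}

/-- Local monomialization in dimension `n`: along any ultrafilter converging to the origin, every
nonzero holomorphic germ becomes a monomial times a unit in some chart. -/
def Monomializable (n : ℕ) : Prop :=
  ∀ f : (Fin n → ℂ) → ℂ, AnalyticAt ℂ f 0 → (¬ ∀ᶠ y in 𝓝 0, f y = 0) →
    ∀ 𝓤 : Ultrafilter (Fin n → ℂ), (𝓤 : Filter (Fin n → ℂ)) ≤ 𝓝 0 →
      ∃ φ 𝓥, IsChart φ 𝓤 𝓥 ∧ IsMonomialGerm fun y => f (φ y)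

theorem Monomializable.exists_isMonomialChart (hn : Monomializable n) {κ : Type*} {s : Finset κ}
    {f : κ → (Fin n → ℂ) → ℂ} (hf : ∀ k ∈ s, AnalyticAt ℂ (f k) 0)
    (hf0 : ∀ k ∈ s, ¬ ∀ᶠ y in 𝓝 0, f k y = 0) {𝓤 : Ultrafilter (Fin n → ℂ)}
    (h𝓤 : (𝓤 : Filter (Fin n → ℂ)) ≤ 𝓝 0) :
    ∃ φ 𝓥, IsMonomialChart φ 𝓤 𝓥 ∧ ∀ k ∈ s, IsMonomialGerm fun y => f k (φ y) := by
  have hprod : AnalyticAt ℂ (fun y => ∏ k ∈ s, f k y) 0 := s.analyticAt_fun_prod hf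
  have hcoord : AnalyticAt ℂ (fun y : Fin n → ℂ => ∏ i, y i) 0 :=
    Finset.univ.analyticAt_fun_prod fun i _ => analyticAt_coord i 0
  obtain ⟨φ, 𝓥, hφ, hmon⟩ := hn (fun y => (∏ k ∈ s, f k y) * ∏ i, y i) (hprod.fun_mul hcoord)
    (fun h => (eventually_eq_zero_or_eq_zero_of_mul hprod hcoord h).elim
      (not_eventually_prod_eq_zero s hf hf0)
      (not_eventually_prod_eq_zero _ (fun i _ => analyticAt_coord i 0)
        fun i _ => (IsMonomialGerm.coord i).not_eventually_eq_zero)) 𝓤 h𝓤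
  have hpull {g : (Fin n → ℂ) → ℂ} (hg : AnalyticAt ℂ g 0) : AnalyticAt ℂ (fun y => g (φ y)) 0 :=
    hg.fun_comp_of_eq hφ.analyticAt hφ.map_zero
  refine ⟨φ, 𝓥, ⟨hφ, fun i => ?_⟩, fun k hk => ?_⟩
  · exact (IsMonomialGerm.of_mul (hpull hcoord) (hpull hprod)
      (by simpa only [mul_comm] using hmon)).of_prod
        (fun i _ => hpull (analyticAt_coord i 0)) (Finset.mem_univ i)
  · exact (IsMonomialGerm.of_mul (hpull hprod) (hpull hcoord) hmon).of_prod
      (fun k hk => hpull (hf k hk)) hk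

theorem exists_isMonomialChart_germDvd_pow {κ : Type*} {s : Finset κ} {c : κ → (Fin n → ℂ) → ℂ}
    (hc : ∀ k ∈ s, IsMonomialGerm (c k)) {e : κ → ℕ} (he : ∀ k ∈ s, e k ≠ 0)
    {𝓤 : Ultrafilter (Fin n → ℂ)} (h𝓤 : (𝓤 : Filter (Fin n → ℂ)) ≤ 𝓝 0) :
    ∃ φ 𝓥, IsMonomialChart φ 𝓤 𝓥 ∧ ∀ k ∈ s, ∃ m, IsMonomialGerm m ∧
      GermDvd (fun y => m y ^ e k) (fun y => c k (φ y)) ∧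
      GermDvd (fun y => c k (φ y)) (fun y => m y ^ e k) := by
  obtain ⟨φ, 𝓥, hφ, hpow⟩ := exists_isMonomialChart_pow h𝓤 (N := fun _ => ∏ k ∈ s, e k)
    fun _ => Finset.prod_ne_zero_iff.2 he
  refine ⟨φ, 𝓥, hφ, fun k hk => ?_⟩
  obtain ⟨α, hα⟩ := hc k hk
  obtain ⟨N, hN⟩ := Finset.dvd_prod_of_mem e hk
  have hm : HasExponent (fun y : Fin n → ℂ => ∏ i, y i ^ (N * α i)) fun i => N * α i :=
    ⟨1, analyticAt_const, one_ne_zero, by simp⟩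
  have hα' : (α * fun _ => ∏ k ∈ s, e k) = e k • fun i => N * α i := by
    funext i
    simp only [Pi.mul_apply, Pi.smul_apply, smul_eq_mul, hN]
    ring
  have hcα := hα' ▸ hpow _ α hα
  exact ⟨_, ⟨_, hm⟩, (hm.pow (e k)).germDvd hcα le_rfl, hcα.germDvd (hm.pow (e k)) le_rfl⟩

theorem Monomializable.exists_common_root (hn : Monomializable n) {κ : Type*} {s : Finset κ}
    (hs : s.Nonempty) {c : κ → (Fin n → ℂ) → ℂ} (hc : ∀ k ∈ s, AnalyticAt ℂ (c k) 0)
    (hc0 : ∀ k ∈ s, ¬ ∀ᶠ y in 𝓝 0, c k y = 0) {e : κ → ℕ} (he : ∀ k ∈ s, e k ≠ 0)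
    {𝓤 : Ultrafilter (Fin n → ℂ)} (h𝓤 : (𝓤 : Filter (Fin n → ℂ)) ≤ 𝓝 0) :
    ∃ φ 𝓥 m, IsMonomialChart φ 𝓤 𝓥 ∧ IsMonomialGerm m ∧
      (∀ k ∈ s, GermDvd (fun y => m y ^ e k) fun y => c k (φ y)) ∧
      ∃ k ∈ s, GermDvd (fun y => c k (φ y)) fun y => m y ^ e k := by
  obtain ⟨φ₁, 𝓥₁, hφ₁, hmon⟩ := hn.exists_isMonomialChart hc hc0 h𝓤
  obtain ⟨φ₂, 𝓥₂, hφ₂, hroot⟩ := exists_isMonomialChart_germDvd_pow hmon he hφ₁.le_nhds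
  choose! m hm hmc hcm using hroot
  obtain ⟨φ₃, 𝓥₃, hφ₃, k₀, hk₀, hdvd⟩ := exists_isMonomialChart_germDvd hs hm hφ₂.le_nhds
  refine ⟨_, 𝓥₃, fun y => m k₀ (φ₃ y), (hφ₁.comp hφ₂).comp hφ₃,
    hφ₃.comp_isMonomialGerm (hm k₀ hk₀), fun k hk => ?_,
    k₀, hk₀, (hcm k₀ hk₀).comp hφ₃.analyticAt hφ₃.map_zero⟩
  obtain ⟨q, hq, hmq⟩ := hdvd k hk
  exact GermDvd.trans ⟨_, hq.fun_pow (e k), hmq.mono fun y hy => by simp only [hy, mul_pow]⟩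
    ((hmc k hk).comp hφ₃.analyticAt hφ₃.map_zero)

theorem Monomializable.exists_eq_pow_mul (hn : Monomializable n) {c : ℕ → (Fin n → ℂ) → ℂ}
    (hc : ∀ i, AnalyticAt ℂ (c i) 0) (hc0 : ∃ i < d, ¬ ∀ᶠ y in 𝓝 0, c i y = 0) {e : ℕ → ℕ}
    (he : ∀ i < d, e i ≠ 0) {𝓤 : Ultrafilter (Fin n → ℂ)} (h𝓤 : (𝓤 : Filter (Fin n → ℂ)) ≤ 𝓝 0) :
    ∃ φ 𝓥 m, ∃ b : ℕ → (Fin n → ℂ) → ℂ, IsMonomialChart φ 𝓤 𝓥 ∧ IsMonomialGerm m ∧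
      (∀ i < d, AnalyticAt ℂ (b i) 0) ∧ (∀ i < d, ∀ᶠ y in 𝓝 0, c i (φ y) = m y ^ e i * b i y) ∧
      ∃ i < d, b i 0 ≠ 0 := by
  classical
  let s : Finset ℕ := {i ∈ Finset.range d | ¬ ∀ᶠ y in 𝓝 0, c i y = 0}
  have hs {i : ℕ} : i ∈ s ↔ i < d ∧ ¬ ∀ᶠ y in 𝓝 0, c i y = 0 := by simp [s]
  obtain ⟨φ, 𝓥, m, hφ, hm, hdvd, i₀, hi₀, q, hq, hmq⟩ := hn.exists_common_root
    (hc0.imp fun i hi => hs.2 hi) (fun i _ => hc i) (fun i hi => (hs.1 hi).2)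
    (fun i hi => he i (hs.1 hi).1) h𝓤
  have hb (i : ℕ) (hi : i < d) : GermDvd (fun y => m y ^ e i) fun y => c i (φ y) := by
    by_cases his : i ∈ s
    · exact hdvd i his
    · have hci : ∀ᶠ y in 𝓝 0, c i y = 0 := not_not.1 fun h => his (hs.2 ⟨hi, h⟩)
      exact ⟨0, analyticAt_const, (hφ.tendsto_nhds.eventually hci).mono fun y hy => by simp [hy]⟩
  choose! b hb hcb using hb
  have hi₀d := (hs.1 hi₀).1
  refine ⟨φ, 𝓥, m, b, hφ, hm, hb, fun i hi => (hcb i hi).mono fun y hy => hy.trans (mul_comm _ _),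
    i₀, hi₀d, fun hb0 => ?_⟩
  have hunit : ∀ᶠ y in 𝓝 0, q y * b i₀ y = 1 :=
    eventually_eq_of_mul_eq_mul_left (hm.pow (e i₀)).analyticAt
      (hm.pow (e i₀)).not_eventually_eq_zero (hq.fun_mul (hb i₀ hi₀d)) analyticAt_const <| by
      filter_upwards [hmq, hcb i₀ hi₀d] with y hmq hcb
      linear_combination -hmq - q y * hcb
  simpa [hb0] using hunit.self_of_nhds

theorem IsChart.exists_cons {𝓤 : Ultrafilter (Fin (n + 1) → ℂ)}
    (h𝓤 : (𝓤 : Filter (Fin (n + 1) → ℂ)) ≤ 𝓝 0) {φ : (Fin n → ℂ) → Fin n → ℂ}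
    {𝓥 : Ultrafilter (Fin n → ℂ)} (hφ : IsChart φ (𝓤.map Fin.tail) 𝓥) :
    ∃ 𝓦, IsChart (fun y : Fin (n + 1) → ℂ => Fin.cons (y 0) (φ (Fin.tail y))) 𝓤 𝓦 := by
  set Φ : (Fin (n + 1) → ℂ) → Fin (n + 1) → ℂ := fun y => Fin.cons (y 0) (φ (Fin.tail y))
  let tail : (Fin (n + 1) → ℂ) → Fin n → ℂ := Fin.tail
  have hlift : NeBot (comap Φ 𝓤 ⊓ comap tail 𝓥) := by
    refine inf_neBot_iff.2 ?_
    rintro _ ⟨A, hA, hAs⟩ _ ⟨B, hB, hBs⟩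
    have himage : φ '' B ∈ 𝓤.map tail := by
      rw [← hφ.map_eq]
      exact image_mem_map hB
    obtain ⟨x, hxA, v, hvB, hv⟩ := 𝓤.nonempty_of_mem (inter_mem hA himage)
    exact ⟨Fin.cons (x 0) v, hAs (by simpa [Φ, hv, tail] using hxA),
      hBs (by simpa [tail] using hvB)⟩
  set 𝓦 := Ultrafilter.of (comap Φ 𝓤 ⊓ comap tail 𝓥)
  obtain ⟨h𝓦Φ, h𝓦tail⟩ := le_inf_iff.1 (Ultrafilter.of_le (comap Φ 𝓤 ⊓ comap tail 𝓥))
  have hΦ𝓦 : Tendsto Φ 𝓦 𝓤 := map_le_iff_le_comap.2 h𝓦Φ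
  have htail𝓦 : Tendsto tail 𝓦 𝓥 := map_le_iff_le_comap.2 h𝓦tail
  refine ⟨𝓦, analyticAt_cons (analyticAt_coord 0 0)
    (hφ.analyticAt.fun_comp_of_eq (analyticAt_tail 0) rfl), ?_, ?_, Ultrafilter.coe_le_coe.1 hΦ𝓦⟩
  · exact (congrArg (Fin.cons 0) hφ.map_zero).trans cons_zero_zero
  · refine tendsto_pi_nhds.2 (Fin.cases ?_ fun k => ?_)
    · exact (tendsto_pi_nhds.1 (hΦ𝓦.mono_right h𝓤) 0 :)
    · exact (tendsto_pi_nhds.1 (htail𝓦.mono_right hφ.le_nhds) k :)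

end Monomialization

section Regular

variable {n d : ℕ} {f g : (Fin (n + 1) → ℂ) → ℂ} {ψ : (Fin (n + 1) → ℂ) → Fin (n + 1) → ℂ}
  {φ : (Fin n → ℂ) → Fin n → ℂ} {𝓤 𝓥 : Ultrafilter (Fin (n + 1) → ℂ)}

/-- In some chart along `𝓤`, `f` and all coordinates but the first become monomials times units. -/
def TailMonomializable (f : (Fin (n + 1) → ℂ) → ℂ) (𝓤 : Ultrafilter (Fin (n + 1) → ℂ)) : Prop :=
  ∃ φ 𝓥, IsChart φ 𝓤 𝓥 ∧ IsMonomialGerm (fun y => f (φ y)) ∧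
    ∀ k : Fin n, IsMonomialGerm fun y => φ y k.succ

theorem IsMonomialGerm.comp_tail {m : (Fin n → ℂ) → ℂ} (hm : IsMonomialGerm m)
    (hψ : AnalyticAt ℂ ψ 0) (hψ0 : ψ 0 = 0)
    (htail : ∀ k : Fin n, IsMonomialGerm fun y => ψ y k.succ) :
    IsMonomialGerm fun y => m (Fin.tail (ψ y)) :=
  hm.comp (φ := fun y => Fin.tail (ψ y)) ((analyticAt_tail _).fun_comp_of_eq hψ rfl)
    (by rw [hψ0]; rfl) htail

namespace TailMonomializable

theorem congr (hf : TailMonomializable f 𝓤) (hfg : ∀ᶠ y in 𝓝 0, g y = f y) :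
    TailMonomializable g 𝓤 := by
  obtain ⟨φ, 𝓥, hφ, hmon, htail⟩ := hf
  exact ⟨φ, 𝓥, hφ, hmon.congr (hφ.tendsto_nhds.eventually hfg), htail⟩

theorem of_isMonomialGerm (h𝓤 : (𝓤 : Filter (Fin (n + 1) → ℂ)) ≤ 𝓝 0) (hf : IsMonomialGerm f) :
    TailMonomializable f 𝓤 :=
  ⟨_, 𝓤, .id h𝓤, hf, fun k => .coord k.succ⟩

theorem of_isChart (hψ : IsChart ψ 𝓤 𝓥) (htail : ∀ y, Fin.tail (ψ y) = φ (Fin.tail y))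
    (hφ : ∀ k, IsMonomialGerm fun y => φ y k) (hf : TailMonomializable (fun y => f (ψ y)) 𝓥) :
    TailMonomializable f 𝓤 := by
  obtain ⟨χ, 𝓦, hχ, hmon, hχtail⟩ := hf
  refine ⟨_, 𝓦, hψ.comp hχ, hmon, fun k => ?_⟩
  have hmon := (hφ k).comp_tail hχ.analyticAt hχ.map_zero hχtail
  simp only [← htail] at hmon
  exact hmon

theorem of_isChart_update {h : (Fin (n + 1) → ℂ) → ℂ}
    (hψ : IsChart (fun y => Function.update y 0 (h y)) 𝓤 𝓥)
    (hf : TailMonomializable (fun y => f (Function.update y 0 (h y))) 𝓥) :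
    TailMonomializable f 𝓤 :=
  of_isChart (φ := fun x => x) hψ (fun y => Fin.tail_update_zero y _) .coord hf

end TailMonomializable

/-- `F` is a polynomial of degree `d + 1` in the first coordinate, up to a unit at its leading term,
without term of degree `d` and weighted homogeneous in the first coordinate and in the monomial germ
`m` of the others up to the factors `b i`, one of which is a unit. -/
structure IsPrepared (d : ℕ) (F : (Fin (n + 1) → ℂ) → ℂ) (m : (Fin n → ℂ) → ℂ)
    (b : ℕ → (Fin n → ℂ) → ℂ) (U : (Fin (n + 1) → ℂ) → ℂ) : Prop where
  isMonomialGerm : IsMonomialGerm m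
  map_zero : m 0 = 0
  analyticAt_coeff : ∀ i < d, AnalyticAt ℂ (b i) 0
  exists_coeff_ne_zero : ∃ i < d, b i 0 ≠ 0
  analyticAt_unit : AnalyticAt ℂ U 0
  unit_ne_zero : U 0 ≠ 0
  eventually_eq : ∀ᶠ y in 𝓝 0, F y = ∑ i ∈ Finset.range d,
    m (Fin.tail y) ^ (d + 1 - i) * b i (Fin.tail y) * y 0 ^ i + y 0 ^ (d + 1) * U y

theorem exists_isPrepared (hn : Monomializable n) {c : ℕ → (Fin n → ℂ) → ℂ}
    {U : (Fin (n + 1) → ℂ) → ℂ} (hc : ∀ i, AnalyticAt ℂ (c i) 0) (hc0 : ∀ i < d, c i 0 = 0)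
    (hcne : ∃ i < d, ¬ ∀ᶠ x in 𝓝 0, c i x = 0) (hU : AnalyticAt ℂ U 0) (hU0 : U 0 ≠ 0)
    (h𝓤 : (𝓤 : Filter (Fin (n + 1) → ℂ)) ≤ 𝓝 0) :
    ∃ φ : (Fin n → ℂ) → Fin n → ℂ, ∃ 𝓥 m b, IsChart (fun y => Fin.cons (y 0) (φ (Fin.tail y))) 𝓤 𝓥 ∧
      (∀ k, IsMonomialGerm fun x => φ x k) ∧
      IsPrepared d (fun y => ∑ i ∈ Finset.range d, c i (φ (Fin.tail y)) * y 0 ^ i +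
        y 0 ^ (d + 1) * U (Fin.cons (y 0) (φ (Fin.tail y)))) m b
        fun y => U (Fin.cons (y 0) (φ (Fin.tail y))) := by
  let tail : (Fin (n + 1) → ℂ) → Fin n → ℂ := Fin.tail
  have htail : Tendsto tail (𝓝 0) (𝓝 0) := tendsto_zero_of_analyticAt (analyticAt_tail 0) rfl
  obtain ⟨φ, 𝓥, m, b, hφ, hm, hb, hcb, i₀, hi₀, hb₀⟩ := hn.exists_eq_pow_mul hc hcne
    (e := fun i => d + 1 - i) (fun i hi => by omega) (𝓤 := 𝓤.map tail) (htail.mono_left h𝓤)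
  obtain ⟨𝓦, hψ⟩ := hφ.exists_cons h𝓤
  have hm0 : m 0 = 0 := by
    have h := (hcb i₀ hi₀).self_of_nhds
    rw [hφ.map_zero, hc0 i₀ hi₀, eq_comm, mul_eq_zero_iff_right hb₀] at h
    exact eq_zero_of_pow_eq_zero h
  refine ⟨φ, 𝓦, m, b, hψ, hφ.isMonomialGerm, hm, hm0, hb, ⟨i₀, hi₀, hb₀⟩,
    hU.fun_comp_of_eq hψ.analyticAt hψ.map_zero, (congrArg U hψ.map_zero).trans_ne hU0, ?_⟩
  have hsum : ∀ᶠ x in 𝓝 0, ∀ i ∈ Finset.range d, c i (φ x) = m x ^ (d + 1 - i) * b i x :=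
    (eventually_all_finset _).2 fun i hi => hcb i (Finset.mem_range.1 hi)
  filter_upwards [htail.eventually hsum] with y hy
  exact congrArg (· + _) (Finset.sum_congr rfl fun i hi => by rw [← hy i hi])

theorem IsChart.not_germDvd_of_unbounded {m : (Fin (n + 1) → ℂ) → ℂ} (hψ : IsChart ψ 𝓤 𝓥)
    (hunbdd : ∀ C : ℝ, ¬ ∀ᶠ y in 𝓤, ‖f y‖ ≤ C * ‖m y‖) :
    ¬ GermDvd (fun y => m (ψ y)) fun y => f (ψ y) := by
  rintro ⟨q, hq, hmq⟩
  have hqC : ∀ᶠ y in 𝓝 0, ‖q y‖ < ‖q 0‖ + 1 :=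
    hq.continuousAt.norm.eventually_lt_const (lt_add_one _)
  refine hunbdd (‖q 0‖ + 1) ?_
  rw [← hψ.map_eq, Ultrafilter.coe_map, eventually_map]
  filter_upwards [hψ.le_nhds hqC, hψ.le_nhds hmq] with y hqC hmq
  rw [hmq, norm_mul]
  gcongr

theorem sum_pow_mul_pow_add (d : ℕ) (x m s u : ℂ) (b : ℕ → ℂ) :
    ∑ i ∈ Finset.range d, (x * m) ^ (d + 1 - i) * b i * (x * s) ^ i + (x * s) ^ (d + 1) * u =
      x ^ (d + 1) * (∑ i ∈ Finset.range d, m ^ (d + 1 - i) * b i * s ^ i + s ^ (d + 1) * u) := by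
  rw [mul_add, Finset.mul_sum]
  congr 1
  · refine Finset.sum_congr rfl fun i hi => ?_
    rw [mul_pow, mul_pow, ← pow_sub_mul_pow x ((Finset.mem_range.1 hi).le.trans d.le_succ)]
    ring
  · ring

theorem IsPrepared.tailMonomializable_of_unbounded {F U : (Fin (n + 1) → ℂ) → ℂ}
    {m : (Fin n → ℂ) → ℂ} {b : ℕ → (Fin n → ℂ) → ℂ} (hF : IsPrepared d F m b U)
    (h𝓤 : (𝓤 : Filter (Fin (n + 1) → ℂ)) ≤ 𝓝 0)
    (hunbdd : ∀ C : ℝ, ¬ ∀ᶠ y : Fin (n + 1) → ℂ in 𝓤, ‖y 0‖ ≤ C * ‖m (Fin.tail y)‖) :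
    TailMonomializable F 𝓤 := by
  obtain ⟨ψ, 𝓥, hψ, hdvd⟩ := exists_isMonomialChart_germDvd_or h𝓤 (.coord 0)
    (hF.isMonomialGerm.comp_tail (ψ := fun y => y) analyticAt_id rfl fun k => .coord k.succ)
  have hndvd := hψ.not_germDvd_of_unbounded hunbdd
  obtain ⟨q, hq, hmq⟩ := hdvd.resolve_right hndvd
  have hq0 : q 0 = 0 := by
    by_contra hq0
    refine hndvd ⟨_, hq.fun_inv hq0, ?_⟩
    filter_upwards [hmq, hq.continuousAt.eventually_ne hq0] with y hy hqy
    rw [hy, inv_mul_cancel_left₀ hqy]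
  have hlead : AnalyticAt ℂ (fun y => ∑ i ∈ Finset.range d,
      q y ^ (d + 1 - i) * b i (Fin.tail (ψ y)) + U (ψ y)) 0 := by
    refine (Finset.analyticAt_fun_sum _ fun i hi => (hq.fun_pow _).fun_mul ?_).fun_add
      (hF.analyticAt_unit.fun_comp_of_eq hψ.analyticAt hψ.map_zero)
    exact (hF.analyticAt_coeff i (Finset.mem_range.1 hi)).fun_comp_of_eq
      ((analyticAt_tail _).fun_comp_of_eq hψ.analyticAt rfl) (by rw [hψ.map_zero]; rfl)
  have hlead0 : ∑ i ∈ Finset.range d, q 0 ^ (d + 1 - i) * b i (Fin.tail (ψ 0)) + U (ψ 0) ≠ 0 := by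
    rw [Finset.sum_eq_zero fun i hi => ?_, zero_add, hψ.map_zero]
    · exact hF.unit_ne_zero
    · rw [hq0, zero_pow (by have := Finset.mem_range.1 hi; omega), zero_mul]
  refine ⟨ψ, 𝓥, hψ.toIsChart, (((hψ.isMonomialGerm 0).pow (d + 1)).mul
    (.of_ne_zero hlead hlead0)).congr ?_, fun k => hψ.isMonomialGerm k.succ⟩
  filter_upwards [hψ.tendsto_nhds.eventually hF.eventually_eq, hmq] with y hFy hmy
  simpa only [hFy, hmy, mul_one, one_pow, one_mul, mul_comm (q y)] using
    sum_pow_mul_pow_add d (ψ y 0) (q y) 1 (U (ψ y)) fun i => b i (Fin.tail (ψ y))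

open Polynomial in
theorem rootMultiplicity_le_of_coeff_eq_zero {P : ℂ[X]} (hP : P.natDegree = d + 1)
    (hPd : P.coeff d = 0) {i : ℕ} (hi : i < d) (hPi : P.coeff i ≠ 0) (c : ℂ) :
    P.rootMultiplicity c ≤ d := by
  by_contra! hlt
  obtain ⟨Q, hQ⟩ := (pow_dvd_pow _ hlt).trans (P.pow_rootMultiplicity_dvd c)
  have hQ0 : Q ≠ 0 := by rintro rfl; simp [hQ] at hPi
  have hQdeg : Q.natDegree = 0 := by
    have hdeg := congrArg natDegree hQ
    rw [((monic_X_sub_C c).pow _).natDegree_mul' hQ0, natDegree_pow, natDegree_X_sub_C, hP] at hdeg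
    omega
  obtain ⟨u, rfl⟩ : ∃ u, Q = C u := ⟨_, eq_C_of_natDegree_eq_zero hQdeg⟩
  have hcoeff (k : ℕ) : P.coeff k = (-c) ^ (d + 1 - k) * (d + 1).choose k * u := by
    rw [hQ, coeff_mul_C, sub_eq_add_neg, ← C_neg, coeff_X_add_C_pow]
  have hc : c = 0 := by
    have hd := hcoeff d
    have hu : u ≠ 0 := by simpa using hQ0
    simpa [hPd, hu, Nat.cast_add_one_ne_zero] using hd.symm
  exact hPi (by rw [hcoeff, hc, neg_zero, zero_pow (by omega), zero_mul, zero_mul])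

open Polynomial in
theorem analyticOrderAt_eval_const_add {P : ℂ[X]} (hP : P ≠ 0) (c : ℂ) :
    analyticOrderAt (fun t => P.eval (c + t)) 0 = P.rootMultiplicity c := by
  obtain ⟨Q, hPQ, hQ⟩ := P.exists_eq_pow_rootMultiplicity_mul_and_not_dvd hP c
  have heval (R : ℂ[X]) : AnalyticAt ℂ (fun t => R.eval (c + t)) 0 :=
    Differentiable.analyticAt (by fun_prop) 0
  refine (heval P).analyticOrderAt_eq_natCast.2 ⟨fun t => Q.eval (c + t), heval Q, ?_, ?_⟩
  · simpa [dvd_iff_isRoot] using hQ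
  · refine Eventually.of_forall fun t => ?_
    conv_lhs => rw [hPQ]
    simp

open Polynomial in
theorem exists_analyticOrderAt_le {β : ℕ → ℂ} {u : ℂ} (hβ : ∃ i < d, β i ≠ 0) (hu : u ≠ 0)
    (c : ℂ) : ∃ k ≤ d, analyticOrderAt
      (fun t => ∑ i ∈ Finset.range d, β i * (c + t) ^ i + (c + t) ^ (d + 1) * u) 0 = (k : ℕ) := by
  obtain ⟨i, hi, hβi⟩ := hβ
  let P : ℂ[X] := ∑ i ∈ Finset.range d, C (β i) * X ^ i + C u * X ^ (d + 1)
  have hcoeff (k : ℕ) : P.coeff k = (if k < d then β k else 0) + if k = d + 1 then u else 0 := by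
    simp [P, coeff_X_pow]
  have hdeg : P.natDegree = d + 1 := natDegree_eq_of_le_of_coeff_ne_zero
    (natDegree_le_iff_coeff_eq_zero.2 fun k hk => by
      rw [hcoeff, if_neg (by omega), if_neg (by omega), add_zero]) (by simpa [hcoeff] using hu)
  have hP : P ≠ 0 := ne_zero_of_natDegree_gt (d.succ_pos.trans_eq hdeg.symm)
  refine ⟨P.rootMultiplicity c, rootMultiplicity_le_of_coeff_eq_zero hdeg (by simp [hcoeff]) hi
    (by simpa [hcoeff, hi, (hi.trans d.lt_succ_self).ne] using hβi) c, ?_⟩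
  rw [← analyticOrderAt_eval_const_add hP]
  simp [P, eval_finsetSum, mul_comm u]

theorem IsPrepared.tailMonomializable_of_bounded {F U : (Fin (n + 1) → ℂ) → ℂ}
    {m : (Fin n → ℂ) → ℂ} {b : ℕ → (Fin n → ℂ) → ℂ} (hF : IsPrepared d F m b U)
    (h𝓤 : (𝓤 : Filter (Fin (n + 1) → ℂ)) ≤ 𝓝 0) {C : ℝ}
    (hC : ∀ᶠ y : Fin (n + 1) → ℂ in 𝓤, ‖y 0‖ ≤ C * ‖m (Fin.tail y)‖)
    (ih : ∀ k ≤ d, ∀ g : (Fin (n + 1) → ℂ) → ℂ, AnalyticAt ℂ g 0 →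
      analyticOrderAt (fun t => g (Fin.cons t 0)) 0 = (k : ℕ) →
      ∀ 𝓥 : Ultrafilter (Fin (n + 1) → ℂ), (𝓥 : Filter (Fin (n + 1) → ℂ)) ≤ 𝓝 0 →
        TailMonomializable g 𝓥) : TailMonomializable F 𝓤 := by
  obtain ⟨c, 𝓥, hψ⟩ := exists_isChart_mul_add h𝓤
    (m := fun y => m (Fin.tail y)) (i := 0)
    (hF.isMonomialGerm.analyticAt.fun_comp_of_eq (analyticAt_tail 0) rfl) hF.map_zero
    (fun y z => by rw [Fin.tail_update_zero]) hC
  set ψ : (Fin (n + 1) → ℂ) → Fin (n + 1) → ℂ :=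
    fun y => Function.update y 0 (m (Fin.tail y) * (c + y 0)) with hψ_def
  let G : (Fin (n + 1) → ℂ) → ℂ := fun y => ∑ i ∈ Finset.range d, b i (Fin.tail y) * (c + y 0) ^ i +
    (c + y 0) ^ (d + 1) * U (ψ y)
  have hG : AnalyticAt ℂ G 0 := by
    have hc : AnalyticAt ℂ (fun y : Fin (n + 1) → ℂ => c + y 0) 0 :=
      analyticAt_const.fun_add (analyticAt_coord 0 0)
    refine (Finset.analyticAt_fun_sum _ fun i hi => AnalyticAt.fun_mul ?_ (hc.fun_pow i)).fun_add
      ((hc.fun_pow _).fun_mul (hF.analyticAt_unit.fun_comp_of_eq hψ.analyticAt hψ.map_zero))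
    exact (hF.analyticAt_coeff i (Finset.mem_range.1 hi)).fun_comp_of_eq (analyticAt_tail 0) rfl
  have hslice (t : ℂ) : G (Fin.cons t 0) =
      ∑ i ∈ Finset.range d, b i 0 * (c + t) ^ i + (c + t) ^ (d + 1) * U 0 := by
    have hψ0 : ψ (Fin.cons t 0) = 0 := by
      simp [hψ_def, hF.map_zero, Fin.update_cons_zero, cons_zero_zero]
    simp [G, hψ0]
  obtain ⟨k, hk, hord⟩ := exists_analyticOrderAt_le hF.exists_coeff_ne_zero hF.unit_ne_zero c
  obtain ⟨φ, 𝓦, hφ, hGφ, htail⟩ := ih k hk G hG (by simpa only [hslice] using hord) 𝓥 hψ.le_nhds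
  refine TailMonomializable.of_isChart_update hψ ⟨φ, 𝓦, hφ, ?_, htail⟩
  refine (((hF.isMonomialGerm.comp_tail hφ.analyticAt hφ.map_zero htail).pow (d + 1)).mul
    hGφ).congr ?_
  filter_upwards [(hψ.tendsto_nhds.comp hφ.tendsto_nhds).eventually hF.eventually_eq] with y hy
  refine hy.trans ?_
  simpa [G, hψ_def] using
    sum_pow_mul_pow_add d (m (Fin.tail (φ y))) 1 (c + φ y 0) (U (ψ (φ y))) fun i =>
      b i (Fin.tail (φ y))

theorem exists_isChart_shiftZero {θ : (Fin n → ℂ) → ℂ} (hθ : AnalyticAt ℂ θ 0) (hθ0 : θ 0 = 0)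
    (h𝓤 : (𝓤 : Filter (Fin (n + 1) → ℂ)) ≤ 𝓝 0) : ∃ 𝓥, IsChart (shiftZero θ) 𝓤 𝓥 := by
  have hθtail : AnalyticAt ℂ (fun y : Fin (n + 1) → ℂ => θ (Fin.tail y)) 0 :=
    hθ.fun_comp_of_eq (analyticAt_tail 0) rfl
  have hθtail0 : θ (Fin.tail (0 : Fin (n + 1) → ℂ)) = 0 := hθ0
  have hinv : Tendsto (fun y : Fin (n + 1) → ℂ => y 0 - θ (Fin.tail y)) 𝓤 (𝓝 0) :=
    (tendsto_zero_of_analyticAt ((analyticAt_coord 0 0).fun_sub hθtail)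
      (by simp [hθtail0])).mono_left h𝓤
  exact ⟨_, isChart_update h𝓤 ((analyticAt_coord 0 0).fun_add hθtail) (by simp [hθtail0]) 0 hinv
    (Eventually.of_forall fun y => by simp)⟩

/- Induction on the order: after the Tschirnhaus shift the weights of the coefficients become powers
of one monomial, and blowing up either makes the germ monomial or lowers its order. -/
theorem tailMonomializable_of_analyticOrderAt (hn : Monomializable n) (d : ℕ) :
    ∀ f : (Fin (n + 1) → ℂ) → ℂ, AnalyticAt ℂ f 0 →
      analyticOrderAt (fun t => f (Fin.cons t 0)) 0 = d →
      ∀ 𝓤 : Ultrafilter (Fin (n + 1) → ℂ), (𝓤 : Filter (Fin (n + 1) → ℂ)) ≤ 𝓝 0 →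
        TailMonomializable f 𝓤 := by
  induction d using Nat.strong_induction_on with
  | _ d ih =>
  intro f hf hd 𝓤 h𝓤
  have hslice : AnalyticAt ℂ (fun t : ℂ => f (Fin.cons t 0)) 0 :=
    hf.fun_comp_of_eq (analyticAt_cons analyticAt_id analyticAt_const) cons_zero_zero
  obtain _ | d := d
  · refine .of_isMonomialGerm h𝓤 (.of_ne_zero hf ?_)
    simpa [hslice.analyticOrderAt_eq_zero, cons_zero_zero] using hd
  obtain ⟨θ, c, U, hθ, hθ0, hc, hc0, hU, hU0, hfθ⟩ := exists_tschirnhaus hf hd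
  obtain ⟨𝓥, hshift⟩ := exists_isChart_shiftZero hθ hθ0 h𝓤
  refine .of_isChart_update hshift (.congr ?_ hfθ)
  by_cases hcne : ∃ i < d, ¬ ∀ᶠ x in 𝓝 0, c i x = 0
  · obtain ⟨φ, 𝓦, m, b, hφ, hφmon, hprep⟩ := exists_isPrepared hn hc hc0 hcne hU hU0 hshift.le_nhds
    refine .of_isChart hφ (fun y => Fin.tail_cons _ _) hφmon ?_
    by_cases hC : ∃ C : ℝ, ∀ᶠ y : Fin (n + 1) → ℂ in 𝓦, ‖y 0‖ ≤ C * ‖m (Fin.tail y)‖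
    · obtain ⟨C, hC⟩ := hC
      exact hprep.tailMonomializable_of_bounded hφ.le_nhds hC
        fun k hk => ih k (Nat.lt_succ_of_le hk)
    · exact hprep.tailMonomializable_of_unbounded hφ.le_nhds (not_exists.1 hC)
  · push Not at hcne
    refine .congr (.of_isMonomialGerm hshift.le_nhds
      (((IsMonomialGerm.coord 0).pow (d + 1)).mul (.of_ne_zero hU hU0))) ?_
    have hzero : ∀ᶠ x in 𝓝 0, ∀ i ∈ Finset.range d, c i x = 0 :=
      (eventually_all_finset _).2 fun i hi => hcne i (Finset.mem_range.1 hi)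
    let tail : (Fin (n + 1) → ℂ) → Fin n → ℂ := Fin.tail
    have htail : Tendsto tail (𝓝 0) (𝓝 0) := tendsto_zero_of_analyticAt (analyticAt_tail 0) rfl
    filter_upwards [htail.eventually hzero] with y hy
    rw [Finset.sum_eq_zero fun i hi => by rw [hy i hi, zero_mul], zero_add]

theorem exists_analyticOrderAt_slice_eq (hf : AnalyticAt ℂ f 0) (hne : ¬ ∀ᶠ y in 𝓝 0, f y = 0)
    (hf0 : f 0 = 0) : ∃ (L : (Fin (n + 1) → ℂ) ≃L[ℂ] (Fin (n + 1) → ℂ)) (d : ℕ),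
      analyticOrderAt (fun t => f (L (Fin.cons t 0))) 0 = d := by
  obtain ⟨r, hr, hball⟩ := Metric.eventually_nhds_iff_ball.1 hf.eventually_analyticAt
  obtain ⟨x₀, hx₀, hfx₀⟩ : ∃ x ∈ Metric.ball (0 : Fin (n + 1) → ℂ) r, f x ≠ 0 := by
    by_contra! h
    exact hne (Metric.eventually_nhds_iff_ball.2 ⟨r, hr, h⟩)
  have hx0 : x₀ ≠ 0 := by rintro rfl; exact hfx₀ hf0
  have he : (Fin.cons 1 0 : Fin (n + 1) → ℂ) ≠ 0 := fun h => one_ne_zero (congrFun h 0)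
  obtain ⟨L, hL⟩ := SeparatingDual.exists_continuousLinearEquiv_apply_eq (R := ℂ) he hx0
  have hLt (t : ℂ) : L (Fin.cons t 0) = t • x₀ := by
    rw [← hL, ← map_smul]
    congr 1
    funext i
    cases i using Fin.cases <;> simp
  refine ⟨L, _, (ENat.natCast_toNat ?_).symm⟩
  simp only [hLt, ne_eq, analyticOrderAt_eq_top]
  intro hzero
  let I : Set ℂ := {t | t • x₀ ∈ Metric.ball (0 : Fin (n + 1) → ℂ) r}
  have hI : IsPreconnected I :=
    ((convex_ball (0 : Fin (n + 1) → ℂ) r).linear_preimage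
      ((LinearMap.toSpanSingleton ℂ (Fin (n + 1) → ℂ) x₀).restrictScalars ℝ)).isPreconnected
  have han : AnalyticOnNhd ℂ (fun t : ℂ => f (t • x₀)) I := fun t ht =>
    AnalyticAt.fun_comp (f := fun t : ℂ => t • x₀) (hball _ ht)
      (analyticAt_id.fun_smul analyticAt_const)
  have hf1 := han.eqOn_zero_of_preconnected_of_eventuallyEq_zero hI (z₀ := 0)
    (by simpa [I] using hr) hzero (show (1 : ℂ) ∈ I by simpa [I] using hx₀)
  exact hfx₀ (by simpa using hf1)

end Regular

theorem monomializable_zero : Monomializable 0 := fun f hf hne 𝓤 h𝓤 =>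
  ⟨_, _, .id h𝓤, .of_ne_zero hf fun h =>
    hne (Eventually.of_forall fun y => by rwa [Subsingleton.elim y 0])⟩

theorem monomializable_succ {n : ℕ} (hn : Monomializable n) : Monomializable (n + 1) := by
  intro f hf hne 𝓤 h𝓤
  by_cases hf0 : f 0 = 0
  · obtain ⟨L, d, hd⟩ := exists_analyticOrderAt_slice_eq hf hne hf0
    have hL : IsChart L 𝓤 _ := isChart_of_eventually_rightInverse (ρ := L.symm)
      (L.toContinuousLinearMap.analyticAt 0) (map_zero L)
      (by simpa using (L.symm.continuous.tendsto 0).mono_left h𝓤)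
      (Eventually.of_forall fun y => L.apply_symm_apply y)
    obtain ⟨φ, 𝓥, hφ, hmon, -⟩ := tailMonomializable_of_analyticOrderAt hn d (fun y => f (L y))
      (hf.fun_comp_of_eq hL.analyticAt hL.map_zero) hd _ hL.le_nhds
    exact ⟨_, 𝓥, hL.comp hφ, hmon⟩
  · exact ⟨_, _, .id h𝓤, .of_ne_zero hf hf0⟩

theorem monomializable : ∀ n, Monomializable n
  | 0 => monomializable_zero
  | n + 1 => monomializable_succ (monomializable n)

/-! ### Milnor's positivity lemma -/

section Milnor

theorem re_pos_of_eq_mul_sum {ι : Type*} {s : Finset ι} {k l : ℂ} {κ z : ι → ℂ}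
    (hk : |k.im| < k.re) (hκ : ∀ i ∈ s, |(κ i).im| ≤ (κ i).re)
    (h : k = l * ∑ i ∈ s, κ i * ‖z i‖ ^ 2) : 0 < l.re := by
  set S := ∑ i ∈ s, κ i * (‖z i‖ : ℂ) ^ 2 with hS
  have hSsector : |S.im| ≤ S.re := by
    have hre (i : ι) : (κ i * (‖z i‖ : ℂ) ^ 2).re = (κ i).re * ‖z i‖ ^ 2 := by
      rw [← Complex.ofReal_pow, Complex.re_mul_ofReal]
    have him (i : ι) : (κ i * (‖z i‖ : ℂ) ^ 2).im = (κ i).im * ‖z i‖ ^ 2 := by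
      rw [← Complex.ofReal_pow, Complex.im_mul_ofReal]
    rw [hS, Complex.re_sum, Complex.im_sum]
    refine (Finset.abs_sum_le_sum_abs _ _).trans (Finset.sum_le_sum fun i hi => ?_)
    rw [hre, him, abs_mul, abs_of_nonneg (sq_nonneg ‖z i‖)]
    exact mul_le_mul_of_nonneg_right (hκ i hi) (sq_nonneg _)
  have hre : k.re = l.re * S.re - l.im * S.im := by rw [h, Complex.mul_re]
  have him : k.im = l.re * S.im + l.im * S.re := by rw [h, Complex.mul_im]
  have hlS : l.re * (S.re ^ 2 + S.im ^ 2) = k.re * S.re + k.im * S.im := by rw [hre, him]; ring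
  have hSpos : 0 < S.re := by
    refine lt_of_le_of_ne ((abs_nonneg _).trans hSsector) fun hS0 => ?_
    have hSim : S.im = 0 := abs_nonpos_iff.1 (hSsector.trans_eq hS0.symm)
    rw [← hS0, hSim] at hre
    linarith [abs_nonneg k.im]
  refine pos_of_mul_pos_left (b := S.re ^ 2 + S.im ^ 2) ?_ (by positivity)
  have hcross : |k.im * S.im| < k.re * S.re := by
    rw [abs_mul]
    exact mul_lt_mul_of_lt_of_le_of_nonneg_of_pos hk hSsector (abs_nonneg _) hSpos
  linarith [neg_abs_le (k.im * S.im)]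

variable {n : ℕ} {g : (Fin n → ℂ) → ℂ}

theorem hasDerivAt_comp_smul_self {y : Fin n → ℂ} (hg : DifferentiableAt ℂ g y) :
    HasDerivAt (fun t : ℂ => g (t • y)) (fderiv ℂ g y y) 1 := by
  have hsmul : HasDerivAt (fun t : ℂ => t • y) y 1 := by
    simpa using (hasDerivAt_id (1 : ℂ)).smul_const y
  exact hg.hasFDerivAt.comp_hasDerivAt_of_eq (1 : ℂ) hsmul (one_smul ℂ y).symm

/- Euler's identity: `g` restricted to the line through `y` is a power of the parameter times a
unit, so its logarithmic radial derivative tends to the degree of the monomial. -/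
theorem IsMonomialGerm.exists_fderiv_apply_self_eq_mul (hg : IsMonomialGerm g) (hg0 : g 0 = 0) :
    ∃ κ : (Fin n → ℂ) → ℂ,
      ∀ᶠ y in 𝓝 0, fderiv ℂ g y y = κ y * g y ∧ |(κ y).im| < (κ y).re := by
  have hga := hg.analyticAt
  obtain ⟨α, v, hv, hv0, hgv⟩ := hg
  let d : ℕ := ∑ i, α i
  let κ : (Fin n → ℂ) → ℂ := fun y => d + fderiv ℂ v y y / v y
  have hd : 0 < d := by
    by_contra! hd
    have hα : ∀ i, α i = 0 := by simpa [d] using hd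
    have := hgv.self_of_nhds
    simp [hα, hg0, hv0.symm] at this
  have hκ : Tendsto κ (𝓝 0) (𝓝 d) := by
    have hlim : ContinuousAt κ 0 := continuousAt_const.add
      ((hv.fderiv.continuousAt.clm_apply continuousAt_id).div hv.continuousAt hv0)
    simpa [ContinuousAt, κ] using hlim
  have hsector : ∀ᶠ y in 𝓝 0, |(κ y).im| < (κ y).re :=
    ((Complex.continuous_im.tendsto _).comp hκ).abs.eventually_lt
      ((Complex.continuous_re.tendsto _).comp hκ) (by simpa using hd)
  refine ⟨κ, ?_⟩
  filter_upwards [hgv.eventually_nhds, hga.eventually_analyticAt, hv.eventually_analyticAt,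
    hv.continuousAt.eventually_ne hv0, hsector] with y hgy hgay hvy hvy0 hκy
  refine ⟨?_, hκy⟩
  have hpow : HasDerivAt (fun t : ℂ => t ^ d * ∏ i, y i ^ α i) (d * ∏ i, y i ^ α i) 1 := by
    simpa using (hasDerivAt_pow d (1 : ℂ)).mul_const (∏ i, y i ^ α i)
  have hline : HasDerivAt (fun t : ℂ => t ^ d * (∏ i, y i ^ α i) * v (t • y))
      (d * (∏ i, y i ^ α i) * v y + (∏ i, y i ^ α i) * fderiv ℂ v y y) 1 := by
    simpa using hpow.fun_mul (hasDerivAt_comp_smul_self hvy.differentiableAt)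
  have hsmul : Tendsto (fun t : ℂ => t • y) (𝓝 1) (𝓝 y) :=
    (continuous_id.smul continuous_const).tendsto' _ _ (one_smul ℂ y)
  have hgline := (hasDerivAt_comp_smul_self hgay.differentiableAt).unique
    (hline.congr_of_eventuallyEq <| (hsmul.eventually hgy).mono fun t ht => by
      simp only [ht, Pi.smul_apply, smul_eq_mul, mul_pow, Finset.prod_mul_distrib,
        Finset.prod_pow_eq_pow_sum, d])
  rw [hgline, hgy.self_of_nhds]
  simp only [κ]
  field_simp

theorem exists_isMonomialChart_of_basis {F : Type*} [NormedAddCommGroup F] [NormedSpace ℂ F]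
    (b : Module.Basis (Fin n) ℂ F) {f : F → ℂ} (hf : AnalyticAt ℂ f 0)
    (hne : ¬ ∀ᶠ z in 𝓝 0, f z = 0) {𝓤 : Ultrafilter F} (h𝓤 : (𝓤 : Filter F) ≤ 𝓝 0) :
    ∃ φ 𝓥 𝓦, IsMonomialChart φ 𝓥 𝓦 ∧ (IsMonomialGerm fun y => f (∑ i, φ y i • b i)) ∧
      Tendsto (fun y => ∑ i, φ y i • b i) 𝓦 𝓤 := by
  have := b.finiteDimensional_of_finite
  let L : (Fin n → ℂ) ≃L[ℂ] F := b.equivFun.symm.toContinuousLinearEquiv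
  have hL (y : Fin n → ℂ) : ∑ i, y i • b i = L y := (b.equivFun_symm_apply y).symm
  have hfL : AnalyticAt ℂ (fun y => f (L y)) 0 :=
    hf.fun_comp_of_eq (L.toContinuousLinearMap.analyticAt 0) (map_zero L)
  have hLsymm : Tendsto L.symm (𝓝 0) (𝓝 0) := L.symm.continuous.tendsto' 0 0 (map_zero _)
  have hneL : ¬ ∀ᶠ y in 𝓝 0, f (L y) = 0 := fun h =>
    hne ((hLsymm.eventually h).mono fun z hz => by rwa [L.apply_symm_apply] at hz)
  obtain ⟨φ, 𝓦, hφ, hfφ⟩ := (monomializable n).exists_isMonomialChart (s := {()})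
    (f := fun _ y => f (L y)) (fun _ _ => hfL) (fun _ _ => hneL) (𝓤 := 𝓤.map L.symm)
    (hLsymm.mono_left h𝓤)
  simp only [hL]
  refine ⟨φ, _, 𝓦, hφ, hfφ () (Finset.mem_singleton_self _), ?_⟩
  have hLφ : 𝓦.map (fun y => L (φ y)) = 𝓤 := by
    rw [← Function.comp_def L φ, ← Ultrafilter.map_map, hφ.map_eq, Ultrafilter.map_map,
      L.self_comp_symm, Ultrafilter.map_id]
  exact (congrArg Ultrafilter.toFilter hLφ).le

open ComplexConjugate

variable {E : Type*} [NormedAddCommGroup E] [InnerProductSpace ℂ E] {f : E → ℂ}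

theorem fderiv_comp_apply_self {φ : (Fin n → ℂ) → Fin n → ℂ} {y : Fin n → ℂ}
    (b : OrthonormalBasis (Fin n) ℂ E) (hφ : DifferentiableAt ℂ φ y)
    (hf : DifferentiableAt ℂ f (∑ i, φ y i • b i)) {a : ℂ}
    (hfa : ∀ w, fderiv ℂ f (∑ i, φ y i • b i) w = a * inner ℂ (∑ i, φ y i • b i) w) :
    fderiv ℂ (fun y => f (∑ i, φ y i • b i)) y y =
      a * ∑ i, conj (φ y i) * fderiv ℂ (fun y => φ y i) y y := by
  have hsum : HasFDerivAt (fun y => ∑ i, φ y i • b i)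
      (∑ i, (fderiv ℂ (fun y => φ y i) y).smulRight (b i)) y :=
    .fun_sum fun i _ => ((differentiableAt_pi.1 hφ i).hasFDerivAt.smul_const (b i))
  rw [HasFDerivAt.fderiv (f := fun y => f (∑ i, φ y i • b i)) (hf.hasFDerivAt.comp y hsum),
    ContinuousLinearMap.comp_apply, hfa]
  simp [b.inner_eq_ite, mul_comm]

/- In monomial coordinates, applying `df = f l ⟪z, ·⟫` to the Euler field expresses `l` as a
quotient of two numbers in the sector `|im| < re`. -/
theorem eventually_re_pos_of_fderiv_eq_inner [FiniteDimensional ℂ E] (hf : AnalyticAt ℂ f 0)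
    (hf0 : f 0 = 0) : ∀ᶠ z in 𝓝 0, f z ≠ 0 →
      ∀ l : ℂ, (∀ w, fderiv ℂ f z w = f z * l * inner ℂ z w) → 0 < l.re := by
  by_contra hfreq
  obtain ⟨𝓤, h𝓤⟩ := exists_ultrafilter_iff.2 (frequently_iff_neBot.1 (not_eventually.1 hfreq))
  obtain ⟨h𝓤₀, h𝓤bad⟩ := le_inf_iff.1 h𝓤
  have hbad : ∀ᶠ z in 𝓤, ¬ (f z ≠ 0 → _) := le_principal_iff.1 h𝓤bad
  let b := stdOrthonormalBasis ℂ E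
  have hne : ¬ ∀ᶠ z in 𝓝 0, f z = 0 := fun h =>
    hfreq (h.mono fun z hz hfz => absurd hz hfz)
  obtain ⟨φ, 𝓥, 𝓦, hφ, hfφ, hlim⟩ := exists_isMonomialChart_of_basis b.toBasis hf hne h𝓤₀
  simp only [b.coe_toBasis] at hfφ hlim
  obtain ⟨κ, hκ⟩ := hfφ.exists_fderiv_apply_self_eq_mul (by simp [hφ.map_zero, hf0])
  choose κ' hκ' using fun i => (hφ.isMonomialGerm i).exists_fderiv_apply_self_eq_mul
    (by simp [hφ.map_zero])
  obtain ⟨y, ⟨hbady, hfy⟩, hκy, hκ'y, hφy⟩ := ((hlim.eventually (hbad.and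
    (h𝓤₀ hf.eventually_analyticAt))).and (hφ.le_nhds (hκ.and
      ((eventually_all.2 hκ').and hφ.analyticAt.eventually_analyticAt)))).exists
  push Not at hbady
  obtain ⟨hfy0, l, hl, hlre⟩ := hbady
  refine hlre.not_gt (re_pos_of_eq_mul_sum (s := Finset.univ) (z := φ y) hκy.2
    (fun i _ => (hκ'y i).2.le) ?_)
  have heuler := hκy.1.symm.trans
    (fderiv_comp_apply_self b hφy.differentiableAt hfy.differentiableAt hl)
  rw [mul_comm, mul_assoc] at heuler
  refine (mul_left_cancel₀ hfy0 heuler).trans (congrArg _ (Finset.sum_congr rfl fun i _ => ?_))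
  rw [(hκ'y i).1, ← Complex.conj_mul']
  ring

end Milnor

/-! ### A vector field with `df(v) = f` pointing outwards -/

section Field

variable {E : Type*} [NormedAddCommGroup E] [InnerProductSpace ℂ E]

/- Either `L` is a multiple of `⟪z, ·⟫` and `h` applies, or some `u ⟂ z` corrects `L`. -/
theorem exists_apply_eq_and_re_inner_pos {L : E →L[ℂ] ℂ} {c : ℂ} {z : E} (hc : c ≠ 0) (hz : z ≠ 0)
    (h : ∀ l : ℂ, (∀ w, L w = c * l * inner ℂ z w) → 0 < l.re) :
    ∃ v, L v = c ∧ 0 < (inner ℂ z v).re := by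
  have hzz : inner ℂ z z ≠ 0 := inner_self_ne_zero.2 hz
  by_cases hker : ∀ u, inner ℂ z u = 0 → L u = 0
  · have hL (w : E) : L w = inner ℂ z w / inner ℂ z z * L z := by
      have := hker (w - (inner ℂ z w / inner ℂ z z) • z) (by
        rw [inner_sub_right, inner_smul_right, div_mul_cancel₀ _ hzz, sub_self])
      rwa [map_sub, map_smul, smul_eq_mul, sub_eq_zero] at this
    set l := L z / (c * inner ℂ z z) with hl
    have hlz : L z = c * l * inner ℂ z z := by rw [hl]; field_simp
    have hl_re : 0 < l.re := h l fun w => by rw [hL, hlz]; field_simp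
    have hl0 : l ≠ 0 := fun h0 => hl_re.ne' (by rw [h0, Complex.zero_re])
    refine ⟨(l * inner ℂ z z)⁻¹ • z, ?_, ?_⟩
    · rw [map_smul, smul_eq_mul, hlz]
      field_simp
    · rw [inner_smul_right, mul_inv, inv_mul_cancel_right₀ hzz, Complex.inv_re]
      exact div_pos hl_re (Complex.normSq_pos.2 hl0)
  · push Not at hker
    obtain ⟨u, hzu, hu⟩ := hker
    refine ⟨z + ((c - L z) / L u) • u, ?_, ?_⟩
    · rw [map_add, map_smul, smul_eq_mul, div_mul_cancel₀ _ hu, add_sub_cancel]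
    · rw [inner_add_right, inner_smul_right, hzu, mul_zero, add_zero]
      exact (re_inner_self_pos (𝕜 := ℂ)).2 hz

theorem exists_contDiffOn_fderiv_eq_and_re_inner_pos {f : E → ℂ} {z v₀ : E}
    (hf : AnalyticAt ℂ f z) (hfz : f z ≠ 0) (hv : fderiv ℂ f z v₀ = f z)
    (hv_pos : 0 < (inner ℂ z v₀).re) :
    ∃ v : E → E, ∃ N ∈ 𝓝 z, ContDiffOn ℝ 1 v N ∧
      ∀ y ∈ N, fderiv ℂ f y (v y) = f y ∧ 0 < (inner ℂ y (v y)).re := by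
  have hd : ContDiffAt ℝ 1 (fun y => fderiv ℂ f y v₀) z :=
    ((ContinuousLinearMap.apply ℂ ℂ v₀).restrictScalars ℝ).contDiff.contDiffAt.comp z
      (hf.fderiv.restrictScalars (𝕜 := ℝ)).contDiffAt
  have hd0 : fderiv ℂ f z v₀ ≠ 0 := hv ▸ hfz
  set v : E → E := fun y => (f y / fderiv ℂ f y v₀) • v₀
  have hfc : ContDiffAt ℝ 1 f z := hf.restrictScalars.contDiffAt
  have hvc : ContDiffAt ℝ 1 v z := by
    simp only [v, div_eq_mul_inv]
    exact (hfc.mul (hd.inv hd0)).smul contDiffAt_const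
  have hvz : v z = v₀ := by simp only [v, hv, div_self hfz, one_smul]
  have hpos : ∀ᶠ y in 𝓝 z, 0 < (inner ℂ y (v y)).re :=
    (Complex.continuous_re.continuousAt.comp
      (continuousAt_id.inner hvc.continuousAt)).eventually_const_lt (by simpa [hvz])
  obtain ⟨N, hN, hvN⟩ := hvc.contDiffOn le_rfl (by simp)
  refine ⟨v, _, inter_mem hN ((hd.continuousAt.eventually_ne hd0).and hpos),
    hvN.mono inter_subset_left, fun y ⟨_, hy, hy_pos⟩ => ⟨?_, hy_pos⟩⟩
  rw [map_smul, smul_eq_mul, div_mul_cancel₀ _ hy]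

/-- `w` is a compactly supported `C¹` vector field along which `‖z‖` never decreases, `f` is
multiplied at a rate in `[0, 1]`, and on `K` it is multiplied at rate `1` while `‖z‖` strictly
increases. Flowing along it moves a Milnor tube inside `K` to the sphere. -/
structure IsMilnorField (f : E → ℂ) (K : Set E) (w : E → E) : Prop where
  contDiff : ContDiff ℝ 1 w
  hasCompactSupport : HasCompactSupport w
  differentiableAt : ∀ z, w z ≠ 0 → DifferentiableAt ℂ f z
  fderiv_mem_segment : ∀ z, fderiv ℂ f z (w z) ∈ segment ℝ 0 (f z)
  re_inner_nonneg : ∀ z, 0 ≤ (inner ℂ z (w z)).re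
  fderiv_eq : ∀ z ∈ K, fderiv ℂ f z (w z) = f z
  re_inner_pos : ∀ z ∈ K, 0 < (inner ℂ z (w z)).re

theorem convex_setOf_imp {F : Type*} [AddCommGroup F] [Module ℝ F] {p : Prop} {s : Set F}
    (hs : Convex ℝ s) : Convex ℝ {v | p → v ∈ s} := by
  by_cases hp : p
  · simpa only [hp, true_imp_iff, ofPred_mem_eq] using hs
  · simpa only [hp, false_imp_iff, ofPred_true] using convex_univ

/- The conditions on `w z` are convex, so local solutions glue; off `K` the zero field is one. -/
theorem exists_isMilnorField [FiniteDimensional ℂ E] {f : E → ℂ} {Ω K : Set E} (hΩ : IsOpen Ω)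
    (hf : AnalyticOnNhd ℂ f Ω) (hK : IsCompact K) (hKΩ : K ⊆ Ω) (hfK : ∀ z ∈ K, f z ≠ 0)
    (hv : ∀ z ∈ K, ∃ v, fderiv ℂ f z v = f z ∧ 0 < (inner ℂ z v).re) :
    ∃ w, IsMilnorField f K w := by
  have : ProperSpace E := FiniteDimensional.proper ℂ E
  have : FiniteDimensional ℝ E := FiniteDimensional.complexToReal E
  obtain ⟨O, hO, hKO, hOΩ, hOc⟩ := exists_open_between_and_isCompact_closure hK hΩ hKΩ
  let df (z : E) : E →ₗ[ℝ] ℂ := (fderiv ℂ f z).toLinearMap.restrictScalars ℝ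
  let ip (z : E) : E →ₗ[ℝ] ℝ := Complex.reLm ∘ₗ (innerₛₗ ℂ z).restrictScalars ℝ
  let admissible (z : E) : Set E := {v | df z v ∈ segment ℝ 0 (f z) ∧ 0 ≤ ip z v ∧
    (z ∈ K → df z v = f z ∧ 0 < ip z v) ∧ (z ∉ O → v = 0)}
  have hconv (z : E) : Convex ℝ (admissible z) :=
    ((convex_segment _ _).linear_preimage (df z)).inter <|
      ((convex_Ici 0).linear_preimage (ip z)).inter <|
      (convex_setOf_imp <| ((convex_singleton _).linear_preimage (df z)).inter
        ((convex_Ioi 0).linear_preimage (ip z))).inter <| convex_setOf_imp <| convex_singleton 0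
  have hloc (z : E) : ∃ N ∈ 𝓝 z, ∃ v : E → E, ContDiffOn ℝ 1 v N ∧
      ∀ y ∈ N, v y ∈ admissible y := by
    by_cases hz : z ∈ K
    · obtain ⟨v₀, hv₀, hv₀_pos⟩ := hv z hz
      obtain ⟨v, N, hN, hvN, hvz⟩ := exists_contDiffOn_fderiv_eq_and_re_inner_pos
        (hf z (hKΩ hz)) (hfK z hz) hv₀ hv₀_pos
      refine ⟨N ∩ O, inter_mem hN (hO.mem_nhds (hKO hz)), v, hvN.mono inter_subset_left,
        fun y ⟨hyN, hyO⟩ => ?_⟩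
      obtain ⟨hvy, hvy_pos⟩ := hvz y hyN
      refine ⟨?_, hvy_pos.le, fun _ => ⟨hvy, hvy_pos⟩, fun h => absurd hyO h⟩
      exact hvy ▸ right_mem_segment ℝ 0 _
    · refine ⟨Kᶜ, hK.isClosed.isOpen_compl.mem_nhds hz, fun _ => 0, contDiffOn_const,
        fun y hy => ⟨?_, ?_, fun h => absurd h hy, fun _ => rfl⟩⟩
      · rw [map_zero]
        exact left_mem_segment ℝ 0 (f y)
      · rw [map_zero]
  obtain ⟨w, hw⟩ := exists_contMDiffMap_forall_mem_convex_of_local (n := 1)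
    (modelWithCornersSelf ℝ E) hconv fun z => by
      simpa only [contMDiffOn_iff_contDiffOn, WithTop.coe_one] using hloc z
  refine ⟨w, w.contMDiff.contDiff, .intro hOc fun z hz => (hw z).2.2.2 fun h =>
    hz (subset_closure h), fun z hz => ?_, fun z => (hw z).1, fun z => (hw z).2.1,
    fun z hz => ((hw z).2.2.1 hz).1, fun z hz => ((hw z).2.2.1 hz).2⟩
  have hzO : z ∈ O := by_contra fun h => hz ((hw z).2.2.2 h)
  exact (hf z (hOΩ (subset_closure hzO))).differentiableAt

end Field

/-! ### Global flows of bounded Lipschitz fields -/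

section GlobalFlow

variable {E : Type*} [NormedAddCommGroup E] [NormedSpace ℝ E] {w : E → E} {C : NNReal}

theorem eqOn_Ioo_of_hasDerivAt (hw : LipschitzWith C w) {a b t₀ : ℝ} (ht₀ : t₀ ∈ Ioo a b)
    {y z : ℝ → E} (hy : ∀ t ∈ Ioo a b, HasDerivAt y (w (y t)) t)
    (hz : ∀ t ∈ Ioo a b, HasDerivAt z (w (z t)) t) (h : y t₀ = z t₀) : EqOn y z (Ioo a b) :=
  ODE_solution_unique_of_mem_Ioo (v := fun _ => w) (s := fun _ => univ)
    (fun _ _ => hw.lipschitzOnWith) ht₀ (fun t ht => ⟨hy t ht, mem_univ _⟩)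
    (fun t ht => ⟨hz t ht, mem_univ _⟩) h

theorem eq_of_hasDerivAt (hw : LipschitzWith C w) {y z : ℝ → E}
    (hy : ∀ t, HasDerivAt y (w (y t)) t) (hz : ∀ t, HasDerivAt z (w (z t)) t) {t₀ : ℝ}
    (h : y t₀ = z t₀) : y = z :=
  ODE_solution_unique_univ (v := fun _ => w) (s := fun _ => univ)
    (fun _ => hw.lipschitzOnWith) (fun t => ⟨hy t, mem_univ _⟩) (fun t => ⟨hz t, mem_univ _⟩) h

variable [CompleteSpace E] {M : ℝ}

theorem exists_hasDerivAt_continuousOn (hw : LipschitzWith C w) (hM : ∀ z, ‖w z‖ ≤ M) {R T : ℝ}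
    (hR : 0 ≤ R) (hT : 0 ≤ T) :
    ∃ α : E × ℝ → E, (∀ x ∈ Metric.closedBall 0 R, α (x, 0) = x ∧
      ∀ t ∈ Ioo (-T) T, HasDerivAt (fun t => α (x, t)) (w (α (x, t))) t) ∧
      ContinuousOn α (Metric.closedBall 0 R ×ˢ Ioo (-T) T) := by
  have hM0 : 0 ≤ M := (norm_nonneg _).trans (hM 0)
  have hpl : IsPicardLindelof (fun _ => w) (tmin := -T) (tmax := T) ⟨0, by simp [hT]⟩ (0 : E)
      ⟨R + M * T, by positivity⟩ ⟨R, hR⟩ ⟨M, hM0⟩ C :=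
    .of_time_independent (fun x _ => hM x) hw.lipschitzOnWith (by
      change M * max (T - 0) (0 - -T) ≤ (R + M * T) - R
      simp)
  obtain ⟨α, hα, hαc⟩ := hpl.exists_forall_mem_closedBall_eq_hasDerivWithinAt_continuousOn
  refine ⟨α, fun x hx => ⟨(hα x hx).1, fun t ht => ?_⟩,
    hαc.mono (prod_mono le_rfl Ioo_subset_Icc_self)⟩
  exact ((hα x hx).2 t (Ioo_subset_Icc_self ht)).hasDerivAt (Icc_mem_nhds ht.1 ht.2)

theorem exists_forall_hasDerivAt (hw : LipschitzWith C w) (hM : ∀ z, ‖w z‖ ≤ M) (x : E) :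
    ∃ y : ℝ → E, y 0 = x ∧ ∀ t, HasDerivAt y (w (y t)) t := by
  have hlocal (N : ℕ) : ∃ y : ℝ → E, y 0 = x ∧
      ∀ t ∈ Ioo (-N : ℝ) N, HasDerivAt y (w (y t)) t := by
    obtain ⟨α, hα, -⟩ := exists_hasDerivAt_continuousOn hw hM (norm_nonneg x) N.cast_nonneg
    exact ⟨fun t => α (x, t), hα x (mem_closedBall_zero_iff.2 le_rfl)⟩
  choose y hy0 hy using hlocal
  have hcompat {N N' : ℕ} (h : N ≤ N') {t : ℝ} (ht : |t| < N) : y N t = y N' t := by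
    have hN : (N : ℝ) ≤ N' := Nat.cast_le.2 h
    exact eqOn_Ioo_of_hasDerivAt hw (abs_lt.1 (abs_zero.trans_lt ((abs_nonneg t).trans_lt ht)))
      (hy N) (fun s hs => hy N' s (Ioo_subset_Ioo (neg_le_neg hN) hN hs))
      ((hy0 N).trans (hy0 N').symm) (abs_lt.1 ht)
  let z (t : ℝ) : E := y (⌊|t|⌋₊ + 1) t
  have hz {N : ℕ} {t : ℝ} (ht : |t| < N) : z t = y N t := by
    rcases le_total N (⌊|t|⌋₊ + 1) with h | h
    · exact (hcompat h ht).symm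
    · exact hcompat h (by exact_mod_cast Nat.lt_floor_add_one |t|)
  refine ⟨z, hy0 _, fun t => ?_⟩
  obtain ⟨N, ht⟩ := exists_nat_gt |t|
  rw [hz ht]
  exact (hy N t (abs_lt.1 ht)).congr_of_eventuallyEq <|
    (continuous_abs.continuousAt.eventually_lt_const ht).mono fun s hs => hz hs

theorem exists_flow_hasDerivAt (hw : LipschitzWith C w) (hM : ∀ z, ‖w z‖ ≤ M) :
    ∃ Φ : Flow ℝ E, ∀ x t, HasDerivAt (fun t => Φ t x) (w (Φ t x)) t := by
  choose Φ hΦ0 hΦ using exists_forall_hasDerivAt hw hM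
  have hcont : Continuous (Function.uncurry fun t x => Φ x t) := by
    refine continuous_iff_continuousAt.2 fun ⟨t, x⟩ => ?_
    have hR : ‖x‖ < ‖x‖ + 1 := lt_add_one _
    have hT : |t| < |t| + 1 := lt_add_one _
    obtain ⟨α, hα, hαc⟩ := exists_hasDerivAt_continuousOn hw hM (R := ‖x‖ + 1) (T := |t| + 1)
      (by positivity) (by positivity)
    have hαt : ContinuousAt α (x, t) := hαc.continuousAt <| prod_mem_nhds
      (Metric.closedBall_mem_nhds_of_mem (mem_ball_zero_iff.2 hR))
      (Ioo_mem_nhds (abs_lt.1 hT).1 (abs_lt.1 hT).2)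
    refine (hαt.comp (f := Prod.swap) (x := (t, x)) continuous_swap.continuousAt).congr ?_
    filter_upwards [prod_mem_nhds (Ioo_mem_nhds (abs_lt.1 hT).1 (abs_lt.1 hT).2)
      (Metric.closedBall_mem_nhds_of_mem (mem_ball_zero_iff.2 hR))] with ⟨s, y⟩ ⟨hs, hy⟩
    have h0 : (0 : ℝ) ∈ Ioo (-(|t| + 1)) (|t| + 1) := abs_lt.1 (by simpa using by positivity)
    exact eqOn_Ioo_of_hasDerivAt hw h0 (hα y hy).2 (fun u _ => hΦ y u)
      ((hα y hy).1.trans (hΦ0 y).symm) hs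
  refine ⟨⟨fun t x => Φ x t, hcont, fun s t x => ?_, hΦ0⟩, hΦ⟩
  exact congrFun (eq_of_hasDerivAt hw (fun s => (hΦ x (s + t)).comp_add_const s t)
    (hΦ (Φ x t)) (t₀ := 0) (by rw [zero_add, hΦ0])) s

end GlobalFlow

/-! ### The flow of a Milnor field -/

section NormAlongCurve

variable {F : Type*} [NormedAddCommGroup F] [InnerProductSpace ℝ F] {g g' : ℝ → F}

theorem monotone_norm_of_hasDerivAt (hg : ∀ t, HasDerivAt g (g' t) t)
    (h : ∀ t, 0 ≤ inner ℝ (g t) (g' t)) : Monotone fun t => ‖g t‖ := by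
  have hsq : Monotone fun t => ‖g t‖ ^ 2 :=
    monotone_of_hasDerivAt_nonneg (fun t => (hg t).norm_sq) fun t => mul_nonneg zero_le_two (h t)
  exact fun s t hst => (sq_le_sq₀ (norm_nonneg _) (norm_nonneg _)).1 (hsq hst)

theorem antitone_norm_of_hasDerivAt (hg : ∀ t, HasDerivAt g (g' t) t)
    (h : ∀ t, inner ℝ (g t) (g' t) ≤ 0) : Antitone fun t => ‖g t‖ := by
  have hsq : Antitone fun t => ‖g t‖ ^ 2 :=
    antitone_of_hasDerivAt_nonpos (fun t => (hg t).norm_sq) fun t =>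
      mul_nonpos_of_nonneg_of_nonpos zero_le_two (h t)
  exact fun s t hst => (sq_le_sq₀ (norm_nonneg _) (norm_nonneg _)).1 (hsq hst)

theorem strictMonoOn_norm_of_hasDerivAt {s : Set ℝ} (hs : Convex ℝ s)
    (hg : ∀ t, HasDerivAt g (g' t) t) (h : ∀ t ∈ s, 0 < inner ℝ (g t) (g' t)) :
    StrictMonoOn (fun t => ‖g t‖) s := by
  have hsq : StrictMonoOn (fun t => ‖g t‖ ^ 2) s :=
    strictMonoOn_of_hasDerivWithinAt_pos hs
      (fun t _ => (hg t).norm_sq.continuousAt.continuousWithinAt)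
      (fun t _ => (hg t).norm_sq.hasDerivWithinAt) fun t ht =>
        mul_pos two_pos (h t (interior_subset ht))
  exact fun t ht u hu htu => (sq_lt_sq₀ (norm_nonneg _) (norm_nonneg _)).1 (hsq ht hu htu)

end NormAlongCurve

namespace IsMilnorField

variable {E : Type*} [NormedAddCommGroup E] [InnerProductSpace ℂ E] {f : E → ℂ} {K : Set E}
  {w : E → E} {z : ℝ → E}

theorem hasDerivAt_comp (hw : IsMilnorField f K w) (hz : ∀ t, HasDerivAt z (w (z t)) t) (t : ℝ) :
    HasDerivAt (fun t => f (z t)) (fderiv ℂ f (z t) (w (z t))) t := by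
  by_cases h0 : w (z t) = 0
  · obtain ⟨C, hC⟩ :=
      hw.contDiff.lipschitzWith_of_hasCompactSupport hw.hasCompactSupport one_ne_zero
    have hconst : z = fun _ => z t := eq_of_hasDerivAt hC hz
      (fun s => by simpa only [h0] using hasDerivAt_const s (z t)) (t₀ := t) rfl
    rw [h0, map_zero, hconst]
    exact hasDerivAt_const t _
  · exact ((hw.differentiableAt _ h0).hasFDerivAt.restrictScalars ℝ).comp_hasDerivAt t (hz t)

theorem monotone_norm (hw : IsMilnorField f K w) (hz : ∀ t, HasDerivAt z (w (z t)) t) :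
    Monotone fun t => ‖z t‖ :=
  let _ : InnerProductSpace ℝ E := .rclikeToReal ℂ E
  monotone_norm_of_hasDerivAt hz fun t => hw.re_inner_nonneg (z t)

theorem strictMonoOn_norm (hw : IsMilnorField f K w) (hz : ∀ t, HasDerivAt z (w (z t)) t)
    {s : Set ℝ} (hs : Convex ℝ s) (hsK : ∀ t ∈ s, z t ∈ K) : StrictMonoOn (fun t => ‖z t‖) s :=
  let _ : InnerProductSpace ℝ E := .rclikeToReal ℂ E
  strictMonoOn_norm_of_hasDerivAt hs hz fun t ht => hw.re_inner_pos (z t) (hsK t ht)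

theorem exists_fderiv_eq_smul (hw : IsMilnorField f K w) (x : E) :
    ∃ b ∈ Icc (0 : ℝ) 1, fderiv ℂ f x (w x) = b • f x := by
  obtain ⟨b, hb, h⟩ := segment_eq_image ℝ (0 : ℂ) (f x) ▸ hw.fderiv_mem_segment x
  exact ⟨b, hb, by simpa only [smul_zero, zero_add] using h.symm⟩

theorem monotone_norm_comp (hw : IsMilnorField f K w) (hz : ∀ t, HasDerivAt z (w (z t)) t) :
    Monotone fun t => ‖f (z t)‖ :=
  monotone_norm_of_hasDerivAt (hw.hasDerivAt_comp hz) fun t => by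
    obtain ⟨b, hb, h⟩ := hw.exists_fderiv_eq_smul (z t)
    rw [h, real_inner_smul_right]
    exact mul_nonneg hb.1 real_inner_self_nonneg

theorem hasDerivAt_exp_neg_smul_comp (hw : IsMilnorField f K w)
    (hz : ∀ t, HasDerivAt z (w (z t)) t) (t : ℝ) :
    HasDerivAt (fun t => Real.exp (-t) • f (z t))
      (Real.exp (-t) • (fderiv ℂ f (z t) (w (z t)) - f (z t))) t := by
  refine ((hasDerivAt_neg t).exp.smul (hw.hasDerivAt_comp hz t)).congr_deriv ?_
  rw [smul_sub, mul_neg_one, neg_smul, sub_eq_add_neg]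

theorem norm_comp_le_exp_mul (hw : IsMilnorField f K w) (hz : ∀ t, HasDerivAt z (w (z t)) t)
    {t : ℝ} (ht : 0 ≤ t) : ‖f (z t)‖ ≤ Real.exp t * ‖f (z 0)‖ := by
  have hanti := antitone_norm_of_hasDerivAt (hw.hasDerivAt_exp_neg_smul_comp hz) fun s => by
    obtain ⟨b, hb, h⟩ := hw.exists_fderiv_eq_smul (z s)
    have hrate : b • f (z s) - f (z s) = (b - 1) • f (z s) := by rw [sub_smul, one_smul]
    rw [h, hrate, smul_comm, real_inner_smul_right]
    exact mul_nonpos_of_nonpos_of_nonneg (sub_nonpos.2 hb.2) real_inner_self_nonneg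
  have h := hanti ht
  simp only [norm_smul, Real.norm_eq_abs, Real.abs_exp, neg_zero, Real.exp_zero, abs_one,
    one_mul] at h
  rwa [Real.exp_neg, inv_mul_le_iff₀ (Real.exp_pos t)] at h

theorem comp_eq_exp_mul (hw : IsMilnorField f K w) (hz : ∀ t, HasDerivAt z (w (z t)) t) {t : ℝ}
    (ht : 0 ≤ t) (hK : ∀ s ∈ Icc 0 t, z s ∈ K) : f (z t) = Real.exp t * f (z 0) := by
  have hderiv := hw.hasDerivAt_exp_neg_smul_comp hz
  have hconst := constant_of_has_deriv_right_zero
    (fun s _ => (hderiv s).continuousAt.continuousWithinAt)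
    (fun s hs => by
      simpa only [hw.fderiv_eq _ (hK s (Ico_subset_Icc_self hs)), sub_self, smul_zero]
        using (hderiv s).hasDerivWithinAt) t ⟨ht, le_rfl⟩
  rw [neg_zero, Real.exp_zero, one_smul, Real.exp_neg] at hconst
  rw [← hconst, ← Complex.real_smul, smul_inv_smul₀ (Real.exp_pos t).ne']

end IsMilnorField

/-- A flow that never decreases the norm, multiplies `‖f‖` by at most `exp t` in time `t`, and, on
trajectories that start with `η ≤ ‖f‖` and end in the closed ball of radius `ε`, multiplies `f` by
exactly `exp t` and strictly increases the norm. -/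
structure IsTubeFlow {E : Type*} [NormedAddCommGroup E] (f : E → ℂ) (ε η : ℝ) (Φ : Flow ℝ E) :
    Prop where
  monotone_norm : ∀ x, Monotone fun t => ‖Φ t x‖
  norm_apply_le : ∀ x t, 0 ≤ t → ‖f (Φ t x)‖ ≤ Real.exp t * ‖f x‖
  apply_eq : ∀ x t, 0 ≤ t → η ≤ ‖f x‖ → ‖Φ t x‖ ≤ ε → f (Φ t x) = Real.exp t * f x
  norm_lt : ∀ x t, 0 < t → η ≤ ‖f x‖ → ‖Φ t x‖ ≤ ε → ‖x‖ < ‖Φ t x‖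

theorem IsMilnorField.exists_isTubeFlow {E : Type*} [NormedAddCommGroup E]
    [InnerProductSpace ℂ E] [CompleteSpace E] {f : E → ℂ} {w : E → E} {ε η : ℝ}
    (hw : IsMilnorField f {z ∈ Metric.closedBall 0 ε | η ≤ ‖f z‖} w) :
    ∃ Φ : Flow ℝ E, IsTubeFlow f ε η Φ := by
  obtain ⟨C, hC⟩ :=
    hw.contDiff.lipschitzWith_of_hasCompactSupport hw.hasCompactSupport one_ne_zero
  obtain ⟨M, hM⟩ := hw.hasCompactSupport.exists_bound_of_continuous hw.contDiff.continuous
  obtain ⟨Φ, hΦ⟩ := exists_flow_hasDerivAt hC hM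
  have hmem {x : E} {t : ℝ} (hx : η ≤ ‖f x‖) (hΦx : ‖Φ t x‖ ≤ ε) (s : ℝ) (hs : s ∈ Icc 0 t) :
      Φ s x ∈ {z ∈ Metric.closedBall 0 ε | η ≤ ‖f z‖} := by
    refine ⟨mem_closedBall_zero_iff.2 ((hw.monotone_norm (hΦ x) hs.2).trans hΦx), hx.trans ?_⟩
    simpa only [Φ.map_zero_apply] using hw.monotone_norm_comp (hΦ x) hs.1
  refine ⟨Φ, fun x => hw.monotone_norm (hΦ x), fun x t ht => ?_, fun x t ht hx hΦx => ?_,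
    fun x t ht hx hΦx => ?_⟩
  · simpa only [Φ.map_zero_apply] using hw.norm_comp_le_exp_mul (hΦ x) ht
  · simpa only [Φ.map_zero_apply] using hw.comp_eq_exp_mul (hΦ x) ht (hmem hx hΦx)
  · simpa only [Φ.map_zero_apply] using hw.strictMonoOn_norm (hΦ x) (convex_Icc 0 t)
      (hmem hx hΦx) ⟨le_rfl, ht.le⟩ ⟨ht.le, le_rfl⟩ ht

/-! ### From the sphere to the tube -/

section Tube

variable {E : Type*} {f : E → ℂ} {ε η : ℝ} {y : E}

/-- The time in which exponential growth at rate `1` takes `η` to `‖f y‖`. -/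
noncomputable def tubeTime (f : E → ℂ) (η : ℝ) (y : E) : ℝ :=
  Real.log (‖f y‖ / η)

theorem exp_tubeTime_mul (hη : 0 < η) (hy : η ≤ ‖f y‖) : Real.exp (tubeTime f η y) * η = ‖f y‖ := by
  rw [tubeTime, Real.exp_log (div_pos (hη.trans_le hy) hη), div_mul_cancel₀ _ hη.ne']

theorem tubeTime_nonneg (hη : 0 < η) (hy : η ≤ ‖f y‖) : 0 ≤ tubeTime f η y :=
  Real.log_nonneg ((one_le_div hη).2 hy)

variable [NormedAddCommGroup E] {Φ : Flow ℝ E}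

/-- Flowing a point backwards for its `tubeTime`, which brings it to the tube `‖f‖ = η`. -/
noncomputable def toTube (f : E → ℂ) (η : ℝ) (Φ : Flow ℝ E) (y : E) : E :=
  Φ (-tubeTime f η y) y

theorem flow_tubeTime_toTube (f : E → ℂ) (η : ℝ) (Φ : Flow ℝ E) (y : E) :
    Φ (tubeTime f η y) (toTube f η Φ y) = y := by
  rw [toTube, ← Φ.map_add, add_neg_cancel, Φ.map_zero_apply]

theorem toTube_flow (hη : 0 < η) {x : E} {t : ℝ} (hx : ‖f x‖ = η)
    (ht : f (Φ t x) = Real.exp t * f x) : toTube f η Φ (Φ t x) = x := by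
  have htime : tubeTime f η (Φ t x) = t := by
    rw [tubeTime, ht, norm_mul, Complex.norm_real, Real.norm_eq_abs, Real.abs_exp, hx,
      mul_div_cancel_right₀ _ hη.ne', Real.log_exp]
  rw [toTube, htime, ← Φ.map_add, neg_add_cancel, Φ.map_zero_apply]

theorem continuousOn_toTube {s : Set E} (hη : 0 < η) (hf : ContinuousOn f s)
    (hs : ∀ y ∈ s, η ≤ ‖f y‖) : ContinuousOn (toTube f η Φ) s :=
  Φ.cont'.comp_continuousOn <| ContinuousOn.prodMk
    ((hf.norm.div_const η).log fun y hy => (div_pos (hη.trans_le (hs y hy)) hη).ne').neg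
    continuousOn_id

namespace IsTubeFlow

theorem norm_toTube_le (hΦ : IsTubeFlow f ε η Φ) (hη : 0 < η) (hy : η ≤ ‖f y‖) :
    ‖toTube f η Φ y‖ ≤ ‖y‖ := by
  have h := hΦ.monotone_norm (toTube f η Φ y) (tubeTime_nonneg hη hy)
  simpa only [Φ.map_zero_apply, flow_tubeTime_toTube] using h

theorem apply_eq_exp_tubeTime_mul (hΦ : IsTubeFlow f ε η Φ) (hη : 0 < η) (hyε : ‖y‖ ≤ ε)
    (hy : η ≤ ‖f y‖) : f y = Real.exp (tubeTime f η y) * f (toTube f η Φ y) := by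
  have ht := tubeTime_nonneg hη hy
  have hle := hΦ.norm_apply_le (toTube f η Φ y) _ ht
  rw [flow_tubeTime_toTube, ← exp_tubeTime_mul hη hy] at hle
  have h := hΦ.apply_eq (toTube f η Φ y) _ ht (le_of_mul_le_mul_left hle (Real.exp_pos _))
  rw [flow_tubeTime_toTube] at h
  exact h hyε

theorem norm_apply_toTube (hΦ : IsTubeFlow f ε η Φ) (hη : 0 < η) (hyε : ‖y‖ ≤ ε)
    (hy : η ≤ ‖f y‖) : ‖f (toTube f η Φ y)‖ = η := by
  have h := congrArg norm (hΦ.apply_eq_exp_tubeTime_mul hη hyε hy)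
  rw [norm_mul, Complex.norm_real, Real.norm_eq_abs, Real.abs_exp, ← exp_tubeTime_mul hη hy] at h
  exact (mul_left_cancel₀ (Real.exp_pos _).ne' h).symm

theorem apply_div_norm_toTube (hΦ : IsTubeFlow f ε η Φ) (hη : 0 < η) (hyε : ‖y‖ ≤ ε)
    (hy : η ≤ ‖f y‖) :
    f y / ‖f y‖ = f (toTube f η Φ y) / ‖f (toTube f η Φ y)‖ := by
  rw [hΦ.apply_eq_exp_tubeTime_mul hη hyε hy, norm_mul, Complex.norm_real, Real.norm_eq_abs,
    Real.abs_exp, Complex.ofReal_mul,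
    mul_div_mul_left _ _ (Complex.ofReal_ne_zero.2 (Real.exp_pos _).ne')]

theorem toTube_injOn (hΦ : IsTubeFlow f ε η Φ) :
    InjOn (toTube f η Φ) {x ∈ Metric.sphere 0 ε | η ≤ ‖f x‖} := by
  intro y₁ h₁ y₂ h₂ heq
  wlog hle : tubeTime f η y₁ ≤ tubeTime f η y₂ generalizing y₁ y₂
  · exact (this h₂ h₁ heq.symm (le_of_not_ge hle)).symm
  have hflow : Φ (tubeTime f η y₂ - tubeTime f η y₁) y₁ = y₂ := by
    rw [sub_eq_add_neg, Φ.map_add]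
    exact (congrArg _ heq).trans (flow_tubeTime_toTube f η Φ y₂)
  have hn₁ : ‖y₁‖ = ε := mem_sphere_zero_iff_norm.1 h₁.1
  have hn₂ : ‖y₂‖ = ε := mem_sphere_zero_iff_norm.1 h₂.1
  rcases (sub_nonneg.2 hle).eq_or_lt with h0 | hpos
  · rw [← hflow, ← h0, Φ.map_zero_apply]
  · have hlt := hΦ.norm_lt y₁ _ hpos h₁.2 (by rw [hflow, hn₂])
    rw [hflow, hn₁, hn₂] at hlt
    exact absurd hlt (lt_irrefl ε)

variable [ProperSpace E]

theorem exists_norm_eq (hΦ : IsTubeFlow f ε η Φ) (hη : 0 < η)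
    (hf : ContinuousOn f (Metric.closedBall 0 ε)) {x : E} (hxε : ‖x‖ ≤ ε) (hx : η ≤ ‖f x‖) :
    ∃ t, 0 ≤ t ∧ ‖Φ t x‖ = ε := by
  obtain ⟨B, hB⟩ := (isCompact_closedBall (0 : E) ε).exists_bound_of_continuousOn hf
  obtain ⟨T, hT0, hT⟩ : ∃ T : ℝ, 0 ≤ T ∧ B < Real.exp T * η :=
    ((eventually_ge_atTop 0).and
      ((Real.tendsto_exp_atTop.atTop_mul_const hη).eventually_gt_atTop B)).exists
  have hexit : ε ≤ ‖Φ T x‖ := by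
    by_contra! hlt
    have hBT := hB _ (mem_closedBall_zero_iff.2 hlt.le)
    rw [hΦ.apply_eq x T hT0 hx hlt.le, norm_mul, Complex.norm_real, Real.norm_eq_abs,
      Real.abs_exp] at hBT
    exact hT.not_ge ((mul_le_mul_of_nonneg_left hx (Real.exp_pos T).le).trans hBT)
  have hcont : ContinuousOn (fun t => ‖Φ t x‖) (Icc 0 T) :=
    (Φ.continuous continuous_id continuous_const).norm.continuousOn
  obtain ⟨t, ht, htε⟩ := intermediate_value_Icc hT0 hcont
    (show ε ∈ Icc ‖Φ 0 x‖ ‖Φ T x‖ from ⟨by rwa [Φ.map_zero_apply], hexit⟩)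
  exact ⟨t, ht.1, htε⟩

theorem toTube_bijOn (hΦ : IsTubeFlow f ε η Φ) (hη : 0 < η)
    (hf : ContinuousOn f (Metric.closedBall 0 ε)) :
    BijOn (toTube f η Φ) {x ∈ Metric.sphere 0 ε | η ≤ ‖f x‖}
      {x ∈ Metric.closedBall 0 ε | ‖f x‖ = η} := by
  refine ⟨fun y ⟨hyε, hy⟩ => ?_, hΦ.toTube_injOn, fun x ⟨hxε, hx⟩ => ?_⟩
  · rw [mem_sphere_zero_iff_norm] at hyε
    exact ⟨mem_closedBall_zero_iff.2 ((hΦ.norm_toTube_le hη hy).trans hyε.le),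
      hΦ.norm_apply_toTube hη hyε.le hy⟩
  · obtain ⟨t, ht, htε⟩ := hΦ.exists_norm_eq hη hf (mem_closedBall_zero_iff.1 hxε) hx.ge
    have hft := hΦ.apply_eq x t ht hx.ge htε.le
    refine ⟨Φ t x, ⟨mem_sphere_zero_iff_norm.2 htε, ?_⟩, toTube_flow hη hx hft⟩
    rw [hft, norm_mul, Complex.norm_real, Real.norm_eq_abs, Real.abs_exp, hx]
    exact le_mul_of_one_le_left hη.le (Real.one_le_exp ht)

theorem exists_homeomorph (hΦ : IsTubeFlow f ε η Φ) (hη : 0 < η)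
    (hf : ContinuousOn f (Metric.closedBall 0 ε)) :
    ∃ h : ({x ∈ Metric.closedBall (0 : E) ε | ‖f x‖ = η} : Set _) ≃ₜ
        ({x ∈ Metric.sphere (0 : E) ε | η ≤ ‖f x‖} : Set _),
      ∀ x, f (h x).1 / ‖f (h x).1‖ = f x.1 / ‖f x.1‖ := by
  have hfS : ContinuousOn f (Metric.sphere 0 ε) := hf.mono Metric.sphere_subset_closedBall
  have hcompact : IsCompact {x ∈ Metric.sphere (0 : E) ε | η ≤ ‖f x‖} :=
    (isCompact_sphere 0 ε).of_isClosed_subset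
      (hfS.norm.preimage_isClosed_of_isClosed Metric.isClosed_sphere isClosed_Ici)
      inter_subset_left
  have : CompactSpace {x ∈ Metric.sphere (0 : E) ε | η ≤ ‖f x‖} :=
    isCompact_iff_compactSpace.1 hcompact
  let e := (hΦ.toTube_bijOn hη hf).equiv
  have he : Continuous e := (continuousOn_toTube hη (hfS.mono inter_subset_left)
    fun y hy => hy.2).mapsToRestrict (hΦ.toTube_bijOn hη hf).mapsTo
  refine ⟨he.homeoOfEquivCompactToT2.symm, fun x => ?_⟩
  obtain ⟨y, rfl⟩ := e.surjective x
  have hinv : he.homeoOfEquivCompactToT2.symm (e y) = y := e.symm_apply_apply y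
  rw [hinv]
  exact hΦ.apply_div_norm_toTube hη (mem_sphere_zero_iff_norm.1 y.2.1).le y.2.2

end IsTubeFlow

end Tube

theorem stmt_5_general {E : Type*} [NormedAddCommGroup E] [InnerProductSpace ℂ E]
    [FiniteDimensional ℂ E] {U : Set E} (hU : IsOpen U) (h0U : 0 ∈ U) {f : E → ℂ}
    (hf : DifferentiableOn ℂ f U) (hf0 : f 0 = 0) :
    ∃ ε₀ > 0, Metric.closedBall 0 ε₀ ⊆ U ∧ ∀ ε ≤ ε₀, ∀ η > 0,
      ∃ h : ({x ∈ Metric.closedBall (0 : E) ε | ‖f x‖ = η} : Set _) ≃ₜ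
          ({x ∈ Metric.sphere (0 : E) ε | η ≤ ‖f x‖} : Set _),
        ∀ x, f (h x).1 / ‖f (h x).1‖ = f x.1 / ‖f x.1‖ := by
  have : ProperSpace E := FiniteDimensional.proper ℂ E
  have : CompleteSpace E := FiniteDimensional.complete ℂ E
  have hfU : AnalyticOnNhd ℂ f U := fun z hz => analyticAt_of_differentiableOn hf (hU.mem_nhds hz)
  obtain ⟨ε₀, hε₀, hball⟩ := Metric.nhds_basis_closedBall.eventually_iff.1
    ((hU.eventually_mem h0U).and (eventually_re_pos_of_fderiv_eq_inner (hfU 0 h0U) hf0))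
  refine ⟨ε₀, hε₀, fun z hz => (hball hz).1, fun ε hε η hη => ?_⟩
  have hsub : Metric.closedBall (0 : E) ε ⊆ Metric.closedBall 0 ε₀ :=
    Metric.closedBall_subset_closedBall hε
  have hfε : ContinuousOn f (Metric.closedBall 0 ε) :=
    hf.continuousOn.mono fun z hz => (hball (hsub hz)).1
  have hK : IsCompact {z ∈ Metric.closedBall (0 : E) ε | η ≤ ‖f z‖} :=
    (isCompact_closedBall 0 ε).of_isClosed_subset
      (hfε.norm.preimage_isClosed_of_isClosed Metric.isClosed_closedBall isClosed_Ici)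
      inter_subset_left
  have hfK : ∀ z ∈ {z ∈ Metric.closedBall (0 : E) ε | η ≤ ‖f z‖}, f z ≠ 0 := fun z hz =>
    norm_pos_iff.1 (hη.trans_le hz.2)
  obtain ⟨w, hw⟩ := exists_isMilnorField hU hfU hK (fun z hz => (hball (hsub hz.1)).1) hfK
    fun z hz => exists_apply_eq_and_re_inner_pos (hfK z hz)
      (fun h0 => hfK z hz (h0 ▸ hf0)) ((hball (hsub hz.1)).2 (hfK z hz))
  obtain ⟨Φ, hΦ⟩ := hw.exists_isTubeFlow
  exact hΦ.exists_homeomorph hη hfε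

theorem stmt_5 (n : ℕ) (hn : 1 ≤ n)
    (U : Set (EuclideanSpace ℂ (Fin n))) (hU : IsOpen U)
    (h0U : (0 : EuclideanSpace ℂ (Fin n)) ∈ U)
    (f : EuclideanSpace ℂ (Fin n) → ℂ) (hf : DifferentiableOn ℂ f U) (hf0 : f 0 = 0)
    (hfnz : ∀ W ∈ nhds (0 : EuclideanSpace ℂ (Fin n)), ∃ x ∈ W ∩ U, f x ≠ 0) :
    ∃ ε₀ > (0 : ℝ), Metric.closedBall (0 : EuclideanSpace ℂ (Fin n)) ε₀ ⊆ U ∧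
      ∀ ε : ℝ, 0 < ε → ε ≤ ε₀ →
      ∃ η₀ > (0 : ℝ), ∀ η : ℝ, 0 < η → η ≤ η₀ →
        ∃ h : ({x ∈ Metric.closedBall (0 : EuclideanSpace ℂ (Fin n)) ε | ‖f x‖ = η} : Set _) ≃ₜ
              ({x ∈ Metric.sphere (0 : EuclideanSpace ℂ (Fin n)) ε | η ≤ ‖f x‖} : Set _),
          ∀ x, f ((h x).1 : EuclideanSpace ℂ (Fin n)) / ‖f ((h x).1 : EuclideanSpace ℂ (Fin n))‖
              = f (x.1 : EuclideanSpace ℂ (Fin n)) / ‖f (x.1 : EuclideanSpace ℂ (Fin n))‖ := by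
  obtain ⟨ε₀, hε₀, hball, h⟩ := stmt_5_general hU h0U hf hf0
  exact ⟨ε₀, hε₀, hball, fun ε _ hε => ⟨1, one_pos, fun η hη _ => h ε hε η hη⟩⟩
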